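/- For every N ∈ ℕ there exist a constant C > 0 and an integer N' ∈ ℕ such that ‖ψ_j Op^t_ℏ(a) (ψ_k u)‖_{L²(ℝⁿ)} ≤ C |a|_{S^0_f, N'} ⟨j - k⟩^{-N} ‖u‖_{L²(ℝⁿ)} for all t ∈ [0,1], all ℏ ∈ (0,1], all j, k ∈ ℤ, all a ∈ S^0_f(ℝ^{2n}) and all u ∈ C_c^∞(ℝⁿ). Here ⟨j-k⟩ := (1 + (j-k)²)^{1/2}. -/

import Mathlib

open MeasureTheory Finset

noncomputable section

/-- Points of `ℝⁿ` (with `n = d + 1`) split as `q = (r, θ) ∈ ℝ × ℝ^d`. -/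
abbrev Q (d : ℕ) : Type := ℝ × (Fin d → ℝ)

/-- The coordinate direction `∂_r`. -/
def eR (d : ℕ) : Q d := ((1 : ℝ), 0)

/-- The coordinate direction `∂_{θ_i}`. -/
def eTh (d : ℕ) (i : Fin d) : Q d := ((0 : ℝ), Pi.single i 1)

/-- Directional derivative of a complex-valued function. -/
def dirD {E : Type*} [NormedAddCommGroup E] [NormedSpace ℝ E]
    (v : E) (g : E → ℂ) : E → ℂ :=
  fun x => fderiv ℝ g x v

/-- Multiindices `α = (α₀, α')` split as in the paper. -/
abbrev MIdx (d : ℕ) : Type := ℕ × (Fin d → ℕ)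

/-- `|α| = α₀ + |α'|`. -/
def deg {d : ℕ} (α : MIdx d) : ℕ := α.1 + ∑ i, α.2 i

/-- `|α'|`, the angular part of a multiindex. -/
def degA {d : ℕ} (α : MIdx d) : ℕ := ∑ i, α.2 i

/-- `∂_q^α` acting on functions on `ℝⁿ = ℝ × ℝ^d`. -/
def mderiv1 {d : ℕ} (α : MIdx d) (g : Q d → ℂ) : Q d → ℂ :=
  (dirD (eR d))^[α.1] <|
    (List.finRange d).foldr (fun i h => (dirD (eTh d i))^[α.2 i] h) g

/-- `∂_q^α ∂_p^β` acting on functions on phase space. -/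
def mderiv2 {d : ℕ} (α β : MIdx d) (g : Q d × Q d → ℂ) : Q d × Q d → ℂ :=
  (dirD ((eR d, 0) : Q d × Q d))^[α.1] <|
  (List.finRange d).foldr (fun i h => (dirD ((eTh d i, 0) : Q d × Q d))^[α.2 i] h) <|
  (dirD (((0 : Q d), eR d) : Q d × Q d))^[β.1] <|
  (List.finRange d).foldr (fun i h => (dirD (((0 : Q d), eTh d i) : Q d × Q d))^[β.2 i] h) g

/-- `∂_q^α ∂_p^β ∂_{q'}^γ` acting on amplitudes `a(q, p, q')`. -/
def mderiv3 {d : ℕ} (α β γ : MIdx d) (g : Q d × Q d × Q d → ℂ) : Q d × Q d × Q d → ℂ :=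
  (dirD ((eR d, 0, 0) : Q d × Q d × Q d))^[α.1] <|
  (List.finRange d).foldr (fun i h => (dirD ((eTh d i, 0, 0) : Q d × Q d × Q d))^[α.2 i] h) <|
  (dirD (((0 : Q d), eR d, 0) : Q d × Q d × Q d))^[β.1] <|
  (List.finRange d).foldr (fun i h => (dirD (((0 : Q d), eTh d i, 0) : Q d × Q d × Q d))^[β.2 i] h) <|
  (dirD (((0 : Q d), (0 : Q d), eR d) : Q d × Q d × Q d))^[γ.1] <|
  (List.finRange d).foldr (fun i h => (dirD (((0 : Q d), (0 : Q d), eTh d i) : Q d × Q d × Q d))^[γ.2 i] h) g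

/-- `⟨p⟩ = (1 + ρ² + |η|²)^{1/2}`. -/
def brP {d : ℕ} (p : Q d) : ℝ := Real.sqrt (1 + p.1 ^ 2 + ∑ i, (p.2 i) ^ 2)

/-- `⟨ρ ⊕ f(r)⁻¹ η⟩` evaluated at a phase-space point. -/
def brF {d : ℕ} (f : ℝ → ℝ) (x : Q d × Q d) : ℝ :=
  Real.sqrt (1 + x.2.1 ^ 2 + ∑ i, (x.2.2 i / f x.1.1) ^ 2)

/-- The standing assumption on `f : ℝ → [1, ∞)`: smooth, `f ≥ 1`, and all derivatives
of `log f` of order `≥ 1` are bounded. -/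
def GoodF (f : ℝ → ℝ) : Prop :=
  ContDiff ℝ (⊤ : ℕ∞) f ∧ (∀ r, 1 ≤ f r) ∧
    ∀ j : ℕ, 1 ≤ j → ∃ C : ℝ, ∀ r, |iteratedDeriv j (fun s => Real.log (f s)) r| ≤ C

/-- Membership in the symbol class `S^m_f(ℝ^{2n})`. -/
def IsSymbol {d : ℕ} (f : ℝ → ℝ) (m : ℝ) (a : Q d × Q d → ℂ) : Prop :=
  ContDiff ℝ (⊤ : ℕ∞) a ∧
    ∀ α β : MIdx d, ∃ C : ℝ, ∀ x : Q d × Q d,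
      ‖mderiv2 α β a x‖ ≤ C * f x.1.1 ^ ((degA α : ℝ) - (degA β : ℝ)) * brF f x ^ (m - (deg β : ℝ))

/-- The finite set of multiindices of length `≤ N`. -/
def idxSet (d N : ℕ) : Finset (MIdx d) :=
  ((Finset.range (N + 1)) ×ˢ Fintype.piFinset fun _ : Fin d => Finset.range (N + 1)).filter
    fun α => deg α ≤ N

/-- The seminorm `|a|_{S^m_f, N}`. -/
def symNorm {d : ℕ} (f : ℝ → ℝ) (m : ℝ) (N : ℕ) (a : Q d × Q d → ℂ) : ℝ :=
  ∑ α ∈ idxSet d N, ∑ β ∈ idxSet d N,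
    if deg α + deg β ≤ N then
      ⨆ x : Q d × Q d,
        f x.1.1 ^ (-(degA α : ℝ) + (degA β : ℝ)) * brF f x ^ (-m + (deg β : ℝ)) *
          ‖mderiv2 α β a x‖
    else 0

/-- `p · q`. -/
def qdot {d : ℕ} (p q : Q d) : ℝ := p.1 * q.1 + ∑ i, p.2 i * q.2 i

/-- The oscillating factor `e^{i p · v / ℏ}`. -/
def ephase {d : ℕ} (ℏ : ℝ) (p v : Q d) : ℂ :=
  Complex.exp (Complex.I * Complex.ofReal (qdot p v) / Complex.ofReal ℏ)

/-- The quantization `Op^t_ℏ(a)` of a symbol, acting on functions (trivialized half-densities). -/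
def Op {d : ℕ} (ℏ t : ℝ) (a : Q d × Q d → ℂ) (u : Q d → ℂ) : Q d → ℂ :=
  fun q => ((2 * Real.pi * ℏ) ^ (d + 1) : ℝ)⁻¹ •
    ∫ p : Q d, ∫ q' : Q d,
      a (t • q + (1 - t) • q', p) * ephase ℏ p (q - q') * u q'

/-- Membership in `C_c^∞(ℝⁿ)`. -/
def IsCc {d : ℕ} (u : Q d → ℂ) : Prop := ContDiff ℝ (⊤ : ℕ∞) u ∧ HasCompactSupport u

/-- The `L²` inner product `⟨w, v⟩ = ∫ w \bar v`. -/
def l2inner {d : ℕ} (w v : Q d → ℂ) : ℂ := ∫ q : Q d, w q * (starRingEnd ℂ) (v q)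

/-- The `L²` norm. -/
def l2norm {d : ℕ} (u : Q d → ℂ) : ℝ := (∫ q : Q d, ‖u q‖ ^ 2) ^ (1 / 2 : ℝ)

/-- `Σ_{|β| ≤ N} sup |∂^β u|`. -/
def ckNorm {d : ℕ} (N : ℕ) (u : Q d → ℂ) : ℝ :=
  ∑ β ∈ idxSet d N, ⨆ q : Q d, ‖mderiv1 β u q‖

/-- `⟨ρ ⊕ f(tr + (1-t)r')⁻¹ η⟩` evaluated at a point `(q, p, q')`. -/
def brFA {d : ℕ} (f : ℝ → ℝ) (t : ℝ) (x : Q d × Q d × Q d) : ℝ :=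
  Real.sqrt (1 + x.2.1.1 ^ 2 + ∑ i, (x.2.1.2 i / f (t * x.1.1 + (1 - t) * x.2.2.1)) ^ 2)

/-- Membership in the amplitude class `BS^m_{f,t}(ℝ^{3n})`. -/
def IsAmp {d : ℕ} (f : ℝ → ℝ) (m t : ℝ) (a : Q d × Q d × Q d → ℂ) : Prop :=
  ContDiff ℝ (⊤ : ℕ∞) a ∧
    ∀ α β γ : MIdx d, ∃ C : ℝ, ∀ x : Q d × Q d × Q d,
      ‖mderiv3 α β γ a x‖ ≤
        C * f (t * x.1.1 + (1 - t) * x.2.2.1) ^ ((degA α : ℝ) - (degA β : ℝ) + (degA γ : ℝ)) *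
          brFA f t x ^ (m - (deg β : ℝ))

/-- The seminorm `|a|_{BS^m_{f,t}, N}`. -/
def ampNorm {d : ℕ} (f : ℝ → ℝ) (m t : ℝ) (N : ℕ) (a : Q d × Q d × Q d → ℂ) : ℝ :=
  ∑ α ∈ idxSet d N, ∑ β ∈ idxSet d N, ∑ γ ∈ idxSet d N,
    if deg α + deg β + deg γ ≤ N then
      ⨆ x : Q d × Q d × Q d,
        f (t * x.1.1 + (1 - t) * x.2.2.1) ^ (-(degA α : ℝ) + (degA β : ℝ) - (degA γ : ℝ)) *
          brFA f t x ^ (-m + (deg β : ℝ)) * ‖mderiv3 α β γ a x‖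
    else 0

/-- The quantization of an amplitude `a(q, p, q')`. -/
def OpAmp {d : ℕ} (ℏ : ℝ) (a : Q d × Q d × Q d → ℂ) (u : Q d → ℂ) : Q d → ℂ :=
  fun q => ((2 * Real.pi * ℏ) ^ (d + 1) : ℝ)⁻¹ •
    ∫ p : Q d, ∫ q' : Q d, a (q, p, q') * ephase ℏ p (q - q') * u q'

/-!
Let `s = t α + (1 - t) β` be the midpoint of the cutoffs centred at `α` and `β`. Between the two
cutoffs only the values of the symbol with `|r - s| ≤ 1` matter, and there `f(r)` is comparable to
`f(s)` because `log f` is Lipschitz. Rescaling `θ` by `f(s)` and the momentum by `2πℏ` therefore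
turns the symbol into one all of whose derivatives are bounded for such `r`, uniformly in `t`, `ℏ`,
`α` and `β`.

For such symbols, boundedness on `L²` follows by cutting position and frequency into unit blocks.
On a single block, a Fourier expansion in the midpoint variable reduces the operator to Fourier
multipliers between multiplication operators, controlled by Plancherel; different blocks are
almost orthogonal. The commutator of the operator with a linear function of the position is the
quantization of a derivative of the symbol, so each commutator gains one power of the distance
between the cutoffs. Symbols without decay are reached by truncation and Fatou's lemma.
-/

section

open scoped ContDiff NNReal ENNReal FourierTransform ComplexConjugate InnerProductSpace

section DerivBound

variable {E F G : Type*} [NormedAddCommGroup E] [NormedSpace ℝ E]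
  [NormedAddCommGroup F] [NormedSpace ℝ F] [NormedAddCommGroup G] [NormedSpace ℝ G]

/-- All derivatives of `b` of order at most `n` are bounded by `S` on the set `s`. -/
def DerivBoundOn (n : ℕ) (S : ℝ≥0) (b : E → F) (s : Set E) : Prop :=
  ∀ i ≤ n, ∀ z ∈ s, ‖iteratedFDeriv ℝ i b z‖ ≤ S

variable {n m : ℕ} {A B : ℝ≥0} {b : E → F} {s t : Set E}

theorem DerivBoundOn.mono (h : DerivBoundOn n A b s) (hm : m ≤ n) (ht : t ⊆ s) :
    DerivBoundOn m A b t :=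
  fun i hi z hz => h i (hi.trans hm) z (ht hz)

theorem DerivBoundOn.comp_continuousLinearMap (h : DerivBoundOn n A b s) (hb : ContDiff ℝ ∞ b)
    {L : G →L[ℝ] E} (hL : ‖L‖ ≤ 1) : DerivBoundOn n A (b ∘ L) (L ⁻¹' s) := by
  intro i hi z hz
  rw [L.iteratedFDeriv_comp_right hb z (by exact_mod_cast le_top)]
  refine (ContinuousMultilinearMap.norm_compContinuousLinearMap_le _ _).trans ?_
  calc _ ≤ ‖iteratedFDeriv ℝ i b (L z)‖ * 1 := by
        gcongr
        exact prod_le_one (fun _ _ => norm_nonneg _) (fun _ _ => hL)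
    _ ≤ A := by simpa only [mul_one] using h i hi _ hz

theorem DerivBoundOn.comp_add_right (h : DerivBoundOn n A b s) (c : E) :
    DerivBoundOn n A (fun x => b (x + c)) ((· + c) ⁻¹' s) := by
  intro i hi z hz
  rw [iteratedFDeriv_comp_add_right]
  exact h i hi _ hz

theorem DerivBoundOn.fderiv_apply (h : DerivBoundOn (n + 1) A b s) (hb : ContDiff ℝ ∞ b)
    {v : E} (hv : ‖v‖ ≤ 1) : DerivBoundOn n A (fun x => fderiv ℝ b x v) s := by
  intro i hi z hz
  have hb' : ContDiffAt ℝ (i : ℕ) (fderiv ℝ b) z :=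
    (hb.fderiv_right (m := (i : ℕ)) (by norm_cast; exact le_top)).contDiffAt
  refine (norm_iteratedFDeriv_clm_apply_const (c := v) hb' le_rfl).trans ?_
  rw [norm_iteratedFDeriv_fderiv]
  calc _ ≤ 1 * ‖iteratedFDeriv ℝ (i + 1) b z‖ := by gcongr
    _ ≤ A := by simpa only [one_mul] using h (i + 1) (by omega) z hz

theorem DerivBoundOn.mul {𝔸 : Type*} [NormedRing 𝔸] [NormedAlgebra ℝ 𝔸] {f g : E → 𝔸}
    (hf : DerivBoundOn n A f Set.univ) (hg : DerivBoundOn n B g s)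
    (hfs : ContDiff ℝ ∞ f) (hgs : ContDiff ℝ ∞ g) (hs : tsupport f ⊆ s) :
    DerivBoundOn n (2 ^ n * A * B) (fun x => f x * g x) Set.univ := by
  intro i hi z _
  by_cases hz : z ∈ s
  · refine (norm_iteratedFDeriv_mul_le hfs hgs z (by exact_mod_cast le_top)).trans ?_
    calc _ ≤ ∑ k ∈ range (i + 1), (i.choose k : ℝ) * A * B := by
          refine sum_le_sum fun k hk => ?_
          have hki : k ≤ i := Nat.lt_succ_iff.1 (mem_range.1 hk)
          gcongr
          · exact hf k (hki.trans hi) z trivial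
          · exact hg (i - k) ((Nat.sub_le _ _).trans hi) z hz
      _ = 2 ^ i * A * B := by
          rw [← sum_mul, ← sum_mul]
          congr 2
          exact_mod_cast Nat.sum_range_choose i
      _ ≤ _ := by
          push_cast
          gcongr
          norm_num
  · have hzero : iteratedFDeriv ℝ i (fun x => f x * g x) z = 0 := by
      refine Function.notMem_support.1 fun h => hz (hs ?_)
      exact (tsupport_mul_subset_left (f := f)) (support_iteratedFDeriv_subset i h)
    simp only [hzero, norm_zero, NNReal.coe_nonneg]

theorem exists_derivBoundOn_of_hasCompactSupport (hc : HasCompactSupport b) (hb : ContDiff ℝ ∞ b)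
    (n : ℕ) : ∃ A : ℝ≥0, DerivBoundOn n A b Set.univ := by
  have hbound : ∀ i : ℕ, ∃ C, ∀ z, ‖iteratedFDeriv ℝ i b z‖ ≤ C := fun i =>
    (hc.iteratedFDeriv i).exists_bound_of_continuous
      (hb.continuous_iteratedFDeriv (by exact_mod_cast le_top))
  choose C hC using hbound
  refine ⟨∑ i ∈ range (n + 1), (C i).toNNReal, fun i hi z _ => ?_⟩
  refine ((hC i z).trans (Real.le_coe_toNNReal _)).trans (NNReal.coe_le_coe.2 ?_)
  exact single_le_sum (f := fun i => (C i).toNNReal) (fun _ _ => zero_le)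
    (mem_range.2 (Nat.lt_succ_of_le hi))

end DerivBound

section DecayWeight

variable {E : Type*} [NormedAddCommGroup E]

/-- The weight `(1 + ‖σ‖)⁻ᴾ`. -/
def decay (P : ℕ) (σ : E) : ℝ≥0∞ := ((1 + ‖σ‖ₑ) ^ P)⁻¹

theorem decay_add (P M : ℕ) (σ : E) : decay (P + M) σ = decay P σ * decay M σ := by
  rw [decay, pow_add, ENNReal.mul_inv (Or.inl (by positivity)) (Or.inl (by finiteness))]
  rfl

theorem le_mul_decay {P : ℕ} {σ : E} {x K : ℝ≥0∞} (hx : x ≤ K) (hσ : ‖σ‖ₑ ^ P * x ≤ K) :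
    x ≤ 2 ^ P * K * decay P σ := by
  rw [decay, ← div_eq_mul_inv,
    ENNReal.le_div_iff_mul_le (Or.inl (by positivity)) (Or.inl (by finiteness))]
  rcases le_total ‖σ‖ₑ 1 with h | h
  · calc x * (1 + ‖σ‖ₑ) ^ P ≤ K * (1 + 1) ^ P := by gcongr
      _ = 2 ^ P * K := by rw [one_add_one_eq_two, mul_comm]
  · calc x * (1 + ‖σ‖ₑ) ^ P ≤ x * (‖σ‖ₑ + ‖σ‖ₑ) ^ P := by gcongr
      _ = 2 ^ P * (‖σ‖ₑ ^ P * x) := by rw [← two_mul, mul_pow]; ring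
      _ ≤ 2 ^ P * K := by gcongr

theorem decay_le_of_le_nnnorm_add_two (P : ℕ) {σ : E} {ρ : ℝ≥0} (hρ : ρ ≤ ‖σ‖₊ + 2) :
    decay P σ ≤ (3 ^ P * ((1 + ρ) ^ P)⁻¹ : ℝ≥0) := by
  have hle : 1 + ρ ≤ 3 * (1 + ‖σ‖₊) := by linarith [zero_le (a := ‖σ‖₊)]
  have hcoe : decay P σ = (((1 + ‖σ‖₊) ^ P)⁻¹ : ℝ≥0) := by
    rw [decay, ENNReal.coe_inv (by positivity)]
    push_cast
    rfl
  rw [hcoe, ENNReal.coe_le_coe, ← div_eq_mul_inv, le_div_iff₀ (by positivity),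
    inv_mul_le_iff₀ (by positivity), ← mul_pow, mul_comm _ (3 : ℝ≥0)]
  gcongr

variable [MeasurableSpace E] [BorelSpace E]

theorem measurable_decay (P : ℕ) : Measurable (decay P : E → ℝ≥0∞) :=
  ((measurable_enorm.const_add 1).pow_const P).inv

theorem lintegral_decay_lt_top [NormedSpace ℝ E] [FiniteDimensional ℝ E] (μ : Measure E)
    [μ.IsAddHaarMeasure] {P : ℕ} (hP : Module.finrank ℝ E < P) : ∫⁻ σ, decay P σ ∂μ < ⊤ := by
  convert finite_integral_one_add_norm (μ := μ) (r := P) (by exact_mod_cast hP) using 3 with σ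
  rw [Real.rpow_neg (by positivity), Real.rpow_natCast, ENNReal.ofReal_inv_of_pos (by positivity),
    ENNReal.ofReal_pow (by positivity), ENNReal.ofReal_add zero_le_one (norm_nonneg _),
    ENNReal.ofReal_one, ofReal_norm]
  rfl

end DecayWeight

section L2

theorem sq_eLpNorm_two {α ε : Type*} [MeasurableSpace α] [ENorm ε] (μ : Measure α) (f : α → ε) :
    eLpNorm f 2 μ ^ 2 = ∫⁻ x, ‖f x‖ₑ ^ 2 ∂μ := by
  simpa only [NNReal.coe_ofNat, ENNReal.coe_ofNat, ENNReal.rpow_ofNat] using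
    eLpNorm_nnreal_pow_eq_lintegral (f := f) (μ := μ) (p := 2) two_ne_zero

theorem lintegral_mul_le_eLpNorm_two_mul {α : Type*} [MeasurableSpace α] {μ : Measure α}
    {f g : α → ℝ≥0∞} (hf : AEMeasurable f μ) (hg : AEMeasurable g μ) :
    ∫⁻ x, f x * g x ∂μ ≤ eLpNorm f 2 μ * eLpNorm g 2 μ := by
  simpa only [eLpNorm_eq_lintegral_rpow_enorm_toReal two_ne_zero ENNReal.ofNat_ne_top,
    ENNReal.toReal_ofNat, enorm_eq_self, Pi.mul_apply] using
    ENNReal.lintegral_mul_le_Lp_mul_Lq μ Real.HolderConjugate.two_two hf hg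

theorem lintegral_mul_lintegral_translates_le {G : Type*} [AddGroup G] [MeasurableSpace G]
    [MeasurableAdd₂ G] {μ : Measure G} [μ.IsAddRightInvariant] {h A B : G → ℝ≥0∞}
    (hh : Measurable h) (hA : Measurable A) (hB : Measurable B) (p q : G → G) :
    ∫⁻ σ, h σ * ∫⁻ ξ, A (ξ + p σ) * B (ξ + q σ) ∂μ ∂μ
      ≤ (∫⁻ σ, h σ ∂μ) * (eLpNorm A 2 μ * eLpNorm B 2 μ) := by
  have hinv (D : G → ℝ≥0∞) (hD : Measurable D) (c : G) :
      eLpNorm (fun ξ => D (ξ + c)) 2 μ = eLpNorm D 2 μ :=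
    eLpNorm_comp_measurePreserving hD.aestronglyMeasurable (measurePreserving_add_right μ c)
  rw [← lintegral_mul_const _ hh]
  gcongr with σ
  calc _ ≤ eLpNorm (fun ξ => A (ξ + p σ)) 2 μ * eLpNorm (fun ξ => B (ξ + q σ)) 2 μ :=
        lintegral_mul_le_eLpNorm_two_mul (by fun_prop) (by fun_prop)
    _ = _ := by rw [hinv A hA, hinv B hB]

end L2

section TestFunction

/-- Smooth compactly supported complex-valued functions. -/
structure IsTestFunction {E : Type*} [NormedAddCommGroup E] [NormedSpace ℝ E] (u : E → ℂ) :
    Prop where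
  contDiff : ContDiff ℝ ∞ u
  hasCompactSupport : HasCompactSupport u

namespace IsTestFunction

section Algebra

variable {E : Type*} [NormedAddCommGroup E] [NormedSpace ℝ E] {u v : E → ℂ}

theorem continuous (hu : IsTestFunction u) : Continuous u := hu.contDiff.continuous

theorem mul_left (hu : IsTestFunction u) (hv : ContDiff ℝ ∞ v) :
    IsTestFunction (fun x => v x * u x) :=
  ⟨hv.mul hu.contDiff, hu.hasCompactSupport.mul_left⟩

theorem mul_right (hu : IsTestFunction u) (hv : ContDiff ℝ ∞ v) :
    IsTestFunction (fun x => u x * v x) :=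
  ⟨hu.contDiff.mul hv, hu.hasCompactSupport.mul_right⟩

theorem fderiv_apply (hu : IsTestFunction u) (e : E) : IsTestFunction (fun x => fderiv ℝ u x e) :=
  ⟨(hu.contDiff.fderiv_right (m := ∞) (by simp only [ENat.coe_top_add_one, le_refl])).clm_apply
    contDiff_const, hu.hasCompactSupport.fderiv_apply ℝ e⟩

theorem integrable [MeasurableSpace E] [OpensMeasurableSpace E] {μ : Measure E}
    [IsFiniteMeasureOnCompacts μ] (hu : IsTestFunction u) : Integrable u μ :=
  hu.continuous.integrable_of_hasCompactSupport hu.hasCompactSupport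

theorem memLp_two [MeasurableSpace E] [OpensMeasurableSpace E] {μ : Measure E}
    [IsFiniteMeasureOnCompacts μ] (hu : IsTestFunction u) : MemLp u 2 μ :=
  hu.continuous.memLp_of_hasCompactSupport hu.hasCompactSupport

end Algebra

variable {V : Type*} [NormedAddCommGroup V] [InnerProductSpace ℝ V] [FiniteDimensional ℝ V]
  [MeasurableSpace V] [BorelSpace V] {u : V → ℂ}

theorem continuous_fourier (hu : IsTestFunction u) : Continuous (𝓕 u) := by
  have hcont := (𝓕 (hu.hasCompactSupport.toSchwartzMap hu.contDiff) : SchwartzMap V ℂ).continuous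
  rwa [SchwartzMap.fourier_coe] at hcont

theorem eLpNorm_fourier (hu : IsTestFunction u) : eLpNorm (𝓕 u) 2 = eLpNorm u 2 := by
  obtain ⟨U, hU⟩ : ∃ U : SchwartzMap V ℂ, ⇑U = u :=
    ⟨hu.hasCompactSupport.toSchwartzMap hu.contDiff, rfl⟩
  obtain ⟨W, hW⟩ : ∃ W : SchwartzMap V ℂ, W = 𝓕 U := ⟨_, rfl⟩
  have hnorm : ‖W.toLp 2‖ = ‖U.toLp 2‖ := by rw [hW, U.norm_fourier_toL2_eq]
  rw [SchwartzMap.norm_toLp, SchwartzMap.norm_toLp,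
    ENNReal.toReal_eq_toReal_iff' (W.memLp 2 volume).eLpNorm_ne_top
      (U.memLp 2 volume).eLpNorm_ne_top] at hnorm
  rwa [hW, SchwartzMap.fourier_coe, hU] at hnorm

end IsTestFunction

end TestFunction

section FourierDecay

variable {V : Type*} [NormedAddCommGroup V] [InnerProductSpace ℝ V] [FiniteDimensional ℝ V]
  [MeasurableSpace V] [BorelSpace V] {c : V → ℂ} {m : V} {R : ℝ} {S : ℝ≥0} {P : ℕ}

theorem DerivBoundOn.integral_norm_iteratedFDeriv_le (hB : DerivBoundOn P S c Set.univ)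
    (hsupp : tsupport c ⊆ Metric.closedBall m R) {i : ℕ} (hi : i ≤ P) :
    ∫ v, ‖iteratedFDeriv ℝ i c v‖ ≤ S * volume.real (Metric.closedBall (0 : V) R) := by
  have hzero : ∀ v ∉ Metric.closedBall m R, ‖iteratedFDeriv ℝ i c v‖ = 0 := fun v hv => by
    rw [norm_eq_zero]
    exact Function.notMem_support.1 fun h => hv (hsupp (support_iteratedFDeriv_subset i h))
  have hvol : volume.real (Metric.closedBall m R) = volume.real (Metric.closedBall (0 : V) R) := by
    simp only [measureReal_def, Measure.addHaar_closedBall_center]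
  rw [← setIntegral_eq_integral_of_forall_compl_eq_zero hzero, ← hvol]
  refine (Real.le_norm_self _).trans ?_
  refine norm_setIntegral_le_of_norm_le_const measure_closedBall_lt_top fun v _ => ?_
  simpa only [norm_norm] using hB i hi v trivial

theorem DerivBoundOn.pow_norm_mul_norm_fourier_le (hB : DerivBoundOn P S c Set.univ)
    (hc : ContDiff ℝ ∞ c) (hsupp : tsupport c ⊆ Metric.closedBall m R) {i : ℕ} (hi : i ≤ P)
    (σ : V) : ‖σ‖ ^ i * ‖𝓕 c σ‖
      ≤ 2 ^ P * ((P + 1) * (S * volume.real (Metric.closedBall (0 : V) R))) := by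
  have hcomp : HasCompactSupport c := HasCompactSupport.of_support_subset_isCompact
    (isCompact_closedBall m R) ((subset_tsupport c).trans hsupp)
  have hint (k j : ℕ) : Integrable fun v => ‖v‖ ^ k * ‖iteratedFDeriv ℝ j c v‖ := by
    have := hc.continuous_iteratedFDeriv (m := j) (by exact_mod_cast le_top)
    exact Continuous.integrable_of_hasCompactSupport (by fun_prop)
      (hcomp.iteratedFDeriv (𝕜 := ℝ) j).norm.mul_left
  have hfourier := Real.pow_mul_norm_iteratedFDeriv_fourier_le (K := ⊤) (N := ⊤) hc
    (fun k j _ _ => hint k j) (k := 0) (n := i) le_top le_top σ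
  simp only [norm_iteratedFDeriv_zero, pow_zero, one_mul, Nat.cast_zero, mul_zero, zero_add,
    range_one, singleton_product, sum_map, Function.Embedding.coeFn_mk] at hfourier
  calc _ ≤ 2 ^ i * ∑ _j ∈ range (i + 1), S * volume.real (Metric.closedBall (0 : V) R) := by
        refine hfourier.trans ?_
        gcongr with j hj
        exact hB.integral_norm_iteratedFDeriv_le hsupp ((mem_range_succ_iff.1 hj).trans hi)
    _ = 2 ^ i * ((i + 1) * (S * volume.real (Metric.closedBall (0 : V) R))) := by
        rw [sum_const, card_range, nsmul_eq_mul, Nat.cast_succ]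
    _ ≤ _ := by
        gcongr
        norm_num

variable (V P R) in
theorem exists_enorm_fourier_le_decay :
    ∃ C : ℝ≥0, ∀ (c : V → ℂ) (m : V) (S : ℝ≥0), ContDiff ℝ ∞ c →
      tsupport c ⊆ Metric.closedBall m R → DerivBoundOn P S c Set.univ →
      ∀ σ, ‖𝓕 c σ‖ₑ ≤ C * S * decay P σ := by
  let K : ℝ≥0 := 2 ^ P * ((P + 1) * (volume.real (Metric.closedBall (0 : V) R)).toNNReal)
  refine ⟨2 ^ P * K, fun c m S hc hsupp hB σ => ?_⟩
  have hpow (i : ℕ) (hi : i ≤ P) : ‖σ‖ₑ ^ i * ‖𝓕 c σ‖ₑ ≤ K * S := by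
    rw [enorm_eq_nnnorm, enorm_eq_nnnorm]
    norm_cast
    rw [← NNReal.coe_le_coe]
    calc _ = ‖σ‖ ^ i * ‖𝓕 c σ‖ := by push_cast; rfl
      _ ≤ _ := hB.pow_norm_mul_norm_fourier_le hc hsupp hi σ
      _ = _ := by
        rw [NNReal.coe_mul, NNReal.coe_mul, NNReal.coe_mul, Real.coe_toNNReal _ measureReal_nonneg]
        push_cast
        ring
  have hzero := hpow 0 (Nat.zero_le _)
  rw [pow_zero, one_mul] at hzero
  convert le_mul_decay hzero (hpow P le_rfl) using 1
  push_cast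
  ring

end FourierDecay

section FourierChar

theorem contDiff_coe_fourierChar : ContDiff ℝ ∞ fun s : ℝ => (𝐞 s : ℂ) := by
  simp only [Real.fourierChar_apply]
  exact ((Complex.ofRealCLM.contDiff.comp (contDiff_const.mul contDiff_id)).mul
    contDiff_const).cexp

theorem coe_fourierChar_add (r s : ℝ) : (𝐞 (r + s) : ℂ) = 𝐞 r * 𝐞 s := by
  rw [AddChar.map_add_eq_mul, Circle.coe_mul]

theorem coe_fourierChar_neg (s : ℝ) : (𝐞 (-s) : ℂ) = conj (𝐞 s : ℂ) := by
  rw [AddChar.map_neg_eq_inv, Circle.coe_inv_eq_conj]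

theorem fourierChar_midpoint_mul {V : Type*} [NormedAddCommGroup V] [InnerProductSpace ℝ V]
    (t : ℝ) (ξ σ x y : V) :
    (𝐞 ⟪σ, t • x + (1 - t) • y⟫_ℝ : ℂ) * 𝐞 ⟪ξ, x - y⟫_ℝ
      = 𝐞 ⟪x, ξ + t • σ⟫_ℝ * 𝐞 (-⟪y, ξ + (t - 1) • σ⟫_ℝ) := by
  rw [← coe_fourierChar_add, ← coe_fourierChar_add]
  congr 2
  simp only [inner_add_right, inner_sub_right, inner_smul_right, real_inner_comm]
  ring

end FourierChar

section Cutoff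

variable (E : Type*) [NormedAddCommGroup E] [NormedSpace ℝ E] [FiniteDimensional ℝ E]

theorem exists_isTestFunction_eq_one_on_closedBall :
    ∃ χ : E → ℂ, IsTestFunction χ ∧ tsupport χ ⊆ Metric.closedBall 0 2 ∧
      (∀ x, ‖χ x‖ ≤ 1) ∧ ∀ x, ‖x‖ ≤ 1 → χ x = 1 := by
  let φ : ContDiffBump (0 : E) := ⟨1, 2, one_pos, one_lt_two⟩
  have hsupp : tsupport (fun x => (φ x : ℂ)) ⊆ tsupport φ :=
    closure_mono (Function.support_comp_subset Complex.ofReal_zero φ)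
  refine ⟨fun x => (φ x : ℂ), ⟨Complex.ofRealCLM.contDiff.comp φ.contDiff, ?_⟩, ?_, ?_, ?_⟩
  · exact φ.hasCompactSupport.comp_left Complex.ofReal_zero
  · exact hsupp.trans φ.tsupport_eq.subset
  · intro x
    rw [Complex.norm_real, Real.norm_of_nonneg φ.nonneg]
    exact φ.le_one
  · intro x hx
    simp only
    rw [φ.one_of_mem_closedBall (mem_closedBall_zero_iff.2 hx), Complex.ofReal_one]

end Cutoff

section Translate

variable {E : Type*} [NormedAddCommGroup E] [NormedSpace ℝ E] {P : ℕ} {A S : ℝ≥0} {χ : E → ℂ}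
  {b : E × E → ℂ}

theorem tsupport_comp_sub_subset {E : Type*} [SeminormedAddCommGroup E] {χ : E → ℂ}
    (hχ : tsupport χ ⊆ Metric.closedBall 0 2) (m : E) :
    tsupport (fun x => χ (x - m)) ⊆ Metric.closedBall m 2 := by
  refine closure_minimal (fun x hx => ?_) Metric.isClosed_closedBall
  simpa only [mem_closedBall_iff_norm, sub_zero] using hχ (subset_tsupport χ hx)

theorem isTestFunction_cutoff_mul (hχ : IsTestFunction χ) (hb : ContDiff ℝ ∞ b) (m ξ : E) :
    IsTestFunction fun x => χ (x - m) * b (x, ξ) := by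
  refine IsTestFunction.mul_right ⟨hχ.contDiff.comp (contDiff_id.sub contDiff_const), ?_⟩
    (hb.comp (contDiff_id.prodMk contDiff_const))
  exact hχ.hasCompactSupport.comp_homeomorph (Homeomorph.subRight m)

theorem DerivBoundOn.cutoff_mul (hχB : DerivBoundOn P A χ Set.univ)
    (hB : DerivBoundOn P S b Set.univ) (hχ : ContDiff ℝ ∞ χ) (hb : ContDiff ℝ ∞ b) (m ξ : E) :
    DerivBoundOn P (2 ^ P * A * S) (fun x => χ (x - m) * b (x, ξ)) Set.univ := by
  refine DerivBoundOn.mul ?_ ?_ (hχ.comp (contDiff_id.sub contDiff_const))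
    (hb.comp (contDiff_id.prodMk contDiff_const)) (Set.subset_univ _)
  · simpa only [sub_eq_add_neg, Set.preimage_univ] using hχB.comp_add_right (-m)
  · have hfibre := (hB.comp_add_right (0, ξ)).comp_continuousLinearMap
      (hb.comp (contDiff_id.add contDiff_const)) (ContinuousLinearMap.norm_inl_le_one ℝ E E)
    simpa only [Function.comp_def, ContinuousLinearMap.inl_apply, Prod.mk_add_mk, add_zero,
      zero_add, Set.preimage_univ] using hfibre

theorem convexComb_mem_closedBall {t r : ℝ} (ht : t ∈ Set.Icc (0 : ℝ) 1) {x y μ ν : E}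
    (hx : x ∈ Metric.closedBall μ r)
    (hy : y ∈ Metric.closedBall ν r) :
    t • x + (1 - t) • y ∈ Metric.closedBall (t • μ + (1 - t) • ν) r := by
  rw [mem_closedBall_iff_norm] at hx hy ⊢
  calc ‖t • x + (1 - t) • y - (t • μ + (1 - t) • ν)‖ = ‖t • (x - μ) + (1 - t) • (y - ν)‖ := by
        congr 1
        module
    _ ≤ ‖t • (x - μ)‖ + ‖(1 - t) • (y - ν)‖ := norm_add_le _ _
    _ = t * ‖x - μ‖ + (1 - t) * ‖y - ν‖ := by
        rw [norm_smul, norm_smul, Real.norm_of_nonneg ht.1, Real.norm_of_nonneg (sub_nonneg.2 ht.2)]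
    _ ≤ t * r + (1 - t) * r := by
        have := sub_nonneg.2 ht.2
        gcongr
        exact ht.1
    _ = r := by ring

end Translate

section QuantForm

variable {V : Type*} [NormedAddCommGroup V] [InnerProductSpace ℝ V] [FiniteDimensional ℝ V]
  [MeasurableSpace V] [BorelSpace V]

/-- The integrand of `quantForm`, at `z = (ξ, x, y)`. -/
def quantIntegrand (t : ℝ) (b : V × V → ℂ) (u w : V → ℂ) (z : V × V × V) : ℂ :=
  b (t • z.2.1 + (1 - t) • z.2.2, z.1) * 𝐞 ⟪z.1, z.2.1 - z.2.2⟫_ℝ * u z.2.2 * conj (w z.2.1)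

/-- The sesquilinear form `⟨b(t x + (1 - t) y, D) u, w⟩` of the `t`-quantization of `b`, with the
momentum scaled so that the phase is `exp (2πi ⟪ξ, x - y⟫)`. -/
def quantForm (t : ℝ) (b : V × V → ℂ) (u w : V → ℂ) : ℂ := ∫ z, quantIntegrand t b u w z

variable {t : ℝ} {b : V × V → ℂ} {c u w : V → ℂ} {P : ℕ} {S : ℝ≥0}

theorem integrable_quantIntegrand (hb : IsTestFunction b) (hu : IsTestFunction u)
    (hw : IsTestFunction w) : Integrable (quantIntegrand t b u w) := by
  have hbc := hb.continuous
  have huc := hu.continuous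
  have hwc := hw.continuous
  have hcont : Continuous (quantIntegrand t b u w) := by
    unfold quantIntegrand
    fun_prop
  refine hcont.integrable_of_hasCompactSupport (.of_support_subset_isCompact
    ((hb.hasCompactSupport.isCompact.image continuous_snd).prod
      (hw.hasCompactSupport.isCompact.prod hu.hasCompactSupport.isCompact)) fun z hz => ?_)
  have hz' := Function.mem_support.1 hz
  simp only [quantIntegrand, mul_ne_zero_iff, map_ne_zero] at hz'
  obtain ⟨⟨⟨hbz, -⟩, huz⟩, hwz⟩ := hz'
  exact ⟨⟨_, subset_tsupport b hbz, rfl⟩, subset_tsupport w hwz, subset_tsupport u huz⟩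

theorem fourier_eq_integral_mul (u : V → ℂ) (η : V) : 𝓕 u η = ∫ y, (𝐞 (-⟪y, η⟫_ℝ) : ℂ) * u y := by
  simp only [Real.fourier_eq, Circle.smul_def, smul_eq_mul]

theorem conj_fourier_eq_integral_mul (w : V → ℂ) (η : V) :
    conj (𝓕 w η) = ∫ x, (𝐞 ⟪x, η⟫_ℝ : ℂ) * conj (w x) := by
  rw [fourier_eq_integral_mul, ← integral_conj]
  simp only [map_mul, ← coe_fourierChar_neg, neg_neg]

theorem IsTestFunction.eq_integral_mul_fourier (hc : IsTestFunction c) (hci : Integrable (𝓕 c))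
    (m : V) : c m = ∫ σ, (𝐞 ⟪σ, m⟫_ℝ : ℂ) * 𝓕 c σ := by
  conv_lhs => rw [← hc.continuous.fourierInv_fourier_eq hc.integrable hci, Real.fourierInv_eq]
  simp only [Circle.smul_def, smul_eq_mul]

theorem integral_midpoint_eq_integral_fourier (hc : IsTestFunction c) (hci : Integrable (𝓕 c))
    (hu : IsTestFunction u) (hw : IsTestFunction w) (ξ : V) :
    ∫ p : V × V, c (t • p.1 + (1 - t) • p.2) * 𝐞 ⟪ξ, p.1 - p.2⟫_ℝ * u p.2 * conj (w p.1)
      = ∫ σ, 𝓕 c σ * (conj (𝓕 w (ξ + t • σ)) * 𝓕 u (ξ + (t - 1) • σ)) := by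
  have := hu.continuous
  have := hw.continuous
  have := hc.continuous_fourier
  let H (p : V × V) (σ : V) : ℂ := (𝐞 ⟪σ, t • p.1 + (1 - t) • p.2⟫_ℝ : ℂ) * 𝐞 ⟪ξ, p.1 - p.2⟫_ℝ *
    ((conj (w p.1) * u p.2) * 𝓕 c σ)
  have hexpand (p : V × V) : c (t • p.1 + (1 - t) • p.2) * 𝐞 ⟪ξ, p.1 - p.2⟫_ℝ * u p.2 *
      conj (w p.1) = ∫ σ, H p σ := by
    rw [hc.eq_integral_mul_fourier hci, ← integral_mul_const, ← integral_mul_const,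
      ← integral_mul_const]
    congr 1 with σ
    ring
  have hint : Integrable (Function.uncurry H) := by
    have hprod : Integrable fun p : V × V => conj (w p.1) * u p.2 :=
      (Complex.conjLIE.integrable_comp_iff.2 hw.integrable).mul_prod hu.integrable
    refine (hprod.mul_prod hci).bdd_mul (c := 1)
      (Continuous.aestronglyMeasurable (by fun_prop)) (ae_of_all _ fun p => ?_)
    rw [norm_mul, Circle.norm_coe, Circle.norm_coe, one_mul]
  simp_rw [hexpand]
  rw [integral_integral_swap hint]
  congr 1 with σ
  calc ∫ p, H p σ = ∫ p : V × V, 𝓕 c σ * (((𝐞 ⟪p.1, ξ + t • σ⟫_ℝ : ℂ) * conj (w p.1)) *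
          ((𝐞 (-⟪p.2, ξ + (t - 1) • σ⟫_ℝ) : ℂ) * u p.2)) := by
        congr 1 with p
        simp only [H, fourierChar_midpoint_mul]
        ring
    _ = _ := by
        rw [integral_const_mul, conj_fourier_eq_integral_mul, fourier_eq_integral_mul u]
        exact congr_arg _ (integral_prod_mul (μ := (volume : Measure V)) (ν := (volume : Measure V))
          (fun x => (𝐞 ⟪x, ξ + t • σ⟫_ℝ : ℂ) * conj (w x))
          (fun y => (𝐞 (-⟪y, ξ + (t - 1) • σ⟫_ℝ) : ℂ) * u y))

theorem enorm_integral_midpoint_le {c : V → V → ℂ} {h : V → ℝ≥0∞} (hc : ∀ ξ, IsTestFunction (c ξ))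
    (hh : Measurable h) (hfin : ∫⁻ σ, h σ < ⊤) (hle : ∀ ξ σ, ‖𝓕 (c ξ) σ‖ₑ ≤ h σ)
    (hu : IsTestFunction u) (hw : IsTestFunction w) :
    ‖∫ ξ, ∫ p : V × V,
        c ξ (t • p.1 + (1 - t) • p.2) * 𝐞 ⟪ξ, p.1 - p.2⟫_ℝ * u p.2 * conj (w p.1)‖ₑ
      ≤ (∫⁻ σ, h σ) * (eLpNorm u 2 * eLpNorm w 2) := by
  have hfu := hu.continuous_fourier.measurable
  have hfw := hw.continuous_fourier.measurable
  have hci (ξ : V) : Integrable (𝓕 (c ξ)) :=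
    ⟨(hc ξ).continuous_fourier.aestronglyMeasurable, (lintegral_mono (hle ξ)).trans_lt hfin⟩
  have hinner (ξ : V) : ‖∫ p : V × V,
      c ξ (t • p.1 + (1 - t) • p.2) * 𝐞 ⟪ξ, p.1 - p.2⟫_ℝ * u p.2 * conj (w p.1)‖ₑ
        ≤ ∫⁻ σ, h σ * (‖𝓕 w (ξ + t • σ)‖ₑ * ‖𝓕 u (ξ + (t - 1) • σ)‖ₑ) := by
    rw [integral_midpoint_eq_integral_fourier (hc ξ) (hci ξ) hu hw ξ]
    refine (enorm_integral_le_lintegral_enorm _).trans (lintegral_mono fun σ => ?_)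
    rw [enorm_mul, enorm_mul, RCLike.enorm_conj]
    exact mul_le_mul_left (hle ξ σ) _
  have hmeas : Measurable fun p : V × V =>
      h p.2 * (‖𝓕 w (p.1 + t • p.2)‖ₑ * ‖𝓕 u (p.1 + (t - 1) • p.2)‖ₑ) := by
    fun_prop
  have hCS := lintegral_mul_lintegral_translates_le (μ := volume) hh hfw.enorm hfu.enorm
    (fun σ => t • σ) fun σ => (t - 1) • σ
  rw [eLpNorm_enorm, eLpNorm_enorm, hu.eLpNorm_fourier, hw.eLpNorm_fourier,
    mul_comm (eLpNorm w 2 volume)] at hCS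
  refine (enorm_integral_le_lintegral_enorm _).trans ((lintegral_mono hinner).trans ?_)
  rw [lintegral_lintegral_swap hmeas.aemeasurable]
  refine (lintegral_congr fun σ => ?_).trans_le hCS
  exact lintegral_const_mul _ (by fun_prop)

variable (V) in
theorem exists_enorm_quantForm_le_of_support_subset_closedBall :
    ∃ C : ℝ≥0, ∀ t ∈ Set.Icc (0 : ℝ) 1, ∀ (b : V × V → ℂ) (S : ℝ≥0), IsTestFunction b →
      DerivBoundOn (Module.finrank ℝ V + 1) S b Set.univ →
      ∀ (μ ν : V) (u w : V → ℂ), IsTestFunction u → IsTestFunction w →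
      Function.support u ⊆ Metric.closedBall ν 1 → Function.support w ⊆ Metric.closedBall μ 1 →
      ‖quantForm t b u w‖ₑ ≤ C * S * (eLpNorm u 2 * eLpNorm w 2) := by
  let P := Module.finrank ℝ V + 1
  obtain ⟨C, hC⟩ := exists_enorm_fourier_le_decay V 2 P
  obtain ⟨χ, hχ, hχsupp, -, hχone⟩ := exists_isTestFunction_eq_one_on_closedBall V
  obtain ⟨A, hA⟩ := exists_derivBoundOn_of_hasCompactSupport hχ.hasCompactSupport hχ.contDiff P
  have hD : ∫⁻ σ : V, decay P σ < ⊤ := lintegral_decay_lt_top volume (Nat.lt_succ_self _)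
  refine ⟨C * (2 ^ P * A) * (∫⁻ σ : V, decay P σ).toNNReal,
    fun t ht b S hb hB μ ν u w hu hw hus hws => ?_⟩
  let m := t • μ + (1 - t) • ν
  let c (ξ x : V) : ℂ := χ (x - m) * b (x, ξ)
  have hdecay (ξ σ : V) : ‖𝓕 (c ξ) σ‖ₑ ≤ C * (2 ^ P * A * S : ℝ≥0) * decay P σ :=
    hC (c ξ) m _ (isTestFunction_cutoff_mul hχ hb.contDiff m ξ).contDiff
      ((tsupport_mul_subset_left (f := fun x => χ (x - m))).trans
        (tsupport_comp_sub_subset hχsupp m))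
      (hA.cutoff_mul hB hχ.contDiff hb.contDiff m ξ) σ
  have hcutoff (z : V × V × V) : quantIntegrand t b u w z =
      c z.1 (t • z.2.1 + (1 - t) • z.2.2) * 𝐞 ⟪z.1, z.2.1 - z.2.2⟫_ℝ * u z.2.2 *
        conj (w z.2.1) := by
    by_cases hz : z.2.2 ∈ Function.support u ∧ z.2.1 ∈ Function.support w
    · have hmid := convexComb_mem_closedBall ht (hws hz.2) (hus hz.1)
      rw [quantIntegrand]
      simp only [c, m, hχone _ (mem_closedBall_iff_norm.1 hmid), one_mul]
    · rw [Function.mem_support, Function.mem_support, ← not_or, not_not] at hz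
      rcases hz with hz | hz <;> simp only [quantIntegrand, hz, map_zero, mul_zero, zero_mul]
  have hform : quantForm t b u w = ∫ ξ, ∫ p : V × V, quantIntegrand t b u w (ξ, p) :=
    integral_prod (μ := (volume : Measure V)) (ν := (volume : Measure (V × V))) _
      (integrable_quantIntegrand hb hu hw)
  simp only [hform, hcutoff]
  refine (enorm_integral_midpoint_le (fun ξ => isTestFunction_cutoff_mul hχ hb.contDiff m ξ)
    ((measurable_decay P).const_mul _) ?_ hdecay hu hw).trans_eq ?_
  · rw [lintegral_const_mul _ (measurable_decay P)]
    exact ENNReal.mul_lt_top ENNReal.coe_lt_top hD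
  · rw [lintegral_const_mul _ (measurable_decay P)]
    push_cast
    rw [ENNReal.coe_toNNReal hD.ne]
    ring

end QuantForm

section Commutator

theorem integral_mul_eq_neg_of_hasLineDerivAt {E : Type*} [NormedAddCommGroup E]
    [NormedSpace ℝ E] [FiniteDimensional ℝ E] [MeasurableSpace E] [BorelSpace E] {μ : Measure E}
    [μ.IsAddHaarMeasure] {f f' g g' : E → ℂ} {v : E} (hf'g : Integrable (fun x => f' x * g x) μ)
    (hfg' : Integrable (fun x => f x * g' x) μ) (hfg : Integrable (fun x => f x * g x) μ)
    (hf : ∀ x, HasLineDerivAt ℝ f (f' x) x v) (hg : ∀ x, HasLineDerivAt ℝ g (g' x) x v) :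
    ∫ x, f x * g' x ∂μ = -∫ x, f' x * g x ∂μ :=
  integral_bilinear_hasLineDerivAt_right_eq_neg_left_of_integrable
    (B := ContinuousLinearMap.mul ℝ ℂ) hf'g hfg' hfg (fun x _ => hf x) fun x _ => hg x

variable {V : Type*} [NormedAddCommGroup V] [InnerProductSpace ℝ V] {t : ℝ} {b : V × V → ℂ}
  {u w : V → ℂ} {e μ ν : V}

theorem contDiff_ofReal_inner_sub (e ν : V) : ContDiff ℝ ∞ fun y => ((⟪e, y - ν⟫_ℝ : ℝ) : ℂ) :=
  Complex.ofRealCLM.contDiff.comp (contDiff_const.inner ℝ (contDiff_id.sub contDiff_const))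

theorem hasLineDerivAt_fourierChar_inner (e : V) (z : V × V × V) :
    HasLineDerivAt ℝ (fun z : V × V × V => (𝐞 ⟪z.1, z.2.1 - z.2.2⟫_ℝ : ℂ))
      (2 * Real.pi * Complex.I * ((⟪e, z.2.1 - z.2.2⟫_ℝ : ℝ) : ℂ) * 𝐞 ⟪z.1, z.2.1 - z.2.2⟫_ℝ)
      z (e, 0, 0) := by
  let a := ⟪z.1, z.2.1 - z.2.2⟫_ℝ
  let d := ⟪e, z.2.1 - z.2.2⟫_ℝ
  have hlin : HasDerivAt (fun s : ℝ => a + s * d) d 0 := by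
    simpa only [id, one_mul] using ((hasDerivAt_id (0 : ℝ)).mul_const d).const_add a
  have hchain := (Real.hasDerivAt_fourierChar (a + 0 * d)).scomp 0 hlin
  rw [HasLineDerivAt]
  convert hchain using 1
  · ext s
    simp only [Prod.fst_add, Prod.snd_add, Prod.smul_mk, smul_zero, add_zero, inner_add_left,
      real_inner_smul_left, Function.comp_apply, a, d]
  · simp only [zero_mul, add_zero, Complex.real_smul, a, d]
    ring

theorem inner_mul_quantIntegrand (e μ ν : V) (z : V × V × V) :
    ((⟪e, z.2.1 - z.2.2⟫_ℝ : ℝ) : ℂ) * quantIntegrand t b u w z =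
      ((⟪e, μ - ν⟫_ℝ : ℝ) : ℂ) * quantIntegrand t b u w z
      - quantIntegrand t b (fun y => ((⟪e, y - ν⟫_ℝ : ℝ) : ℂ) * u y) w z
      + quantIntegrand t b u (fun x => ((⟪e, x - μ⟫_ℝ : ℝ) : ℂ) * w x) z := by
  simp only [quantIntegrand, map_mul, Complex.conj_ofReal, inner_sub_right]
  push_cast
  ring

variable [FiniteDimensional ℝ V] [MeasurableSpace V] [BorelSpace V]

theorem integrable_inner_mul_quantIntegrand (hb : IsTestFunction b) (hu : IsTestFunction u)
    (hw : IsTestFunction w) (e : V) : Integrable fun z : V × V × V =>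
      ((⟪e, z.2.1 - z.2.2⟫_ℝ : ℝ) : ℂ) * quantIntegrand t b u w z := by
  simp only [inner_mul_quantIntegrand e 0 0]
  exact (((integrable_quantIntegrand hb hu hw).const_mul _).sub
    (integrable_quantIntegrand hb (hu.mul_left (contDiff_ofReal_inner_sub e 0)) hw)).add
    (integrable_quantIntegrand hb hu (hw.mul_left (contDiff_ofReal_inner_sub e 0)))

theorem two_pi_I_mul_integral_inner_mul_quantIntegrand (hb : IsTestFunction b)
    (hu : IsTestFunction u) (hw : IsTestFunction w) (e : V) :
    2 * Real.pi * Complex.I *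
        ∫ z : V × V × V, ((⟪e, z.2.1 - z.2.2⟫_ℝ : ℝ) : ℂ) * quantIntegrand t b u w z
      = -quantForm t (fun z => fderiv ℝ b z (0, e)) u w := by
  have hvol₂ : (volume : Measure (V × V)).IsAddHaarMeasure :=
    inferInstanceAs ((volume : Measure V).prod (volume : Measure V)).IsAddHaarMeasure
  have hvol₃ : (volume : Measure (V × V × V)).IsAddHaarMeasure :=
    inferInstanceAs ((volume : Measure V).prod (volume : Measure (V × V))).IsAddHaarMeasure
  let mid (z : V × V × V) : V × V := (t • z.2.1 + (1 - t) • z.2.2, z.1)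
  let f (z : V × V × V) : ℂ := b (mid z) * u z.2.2 * conj (w z.2.1)
  let f' (z : V × V × V) : ℂ := fderiv ℝ b (mid z) (0, e) * u z.2.2 * conj (w z.2.1)
  let g (z : V × V × V) : ℂ := 𝐞 ⟪z.1, z.2.1 - z.2.2⟫_ℝ
  let g' (z : V × V × V) : ℂ := 2 * Real.pi * Complex.I * ((⟪e, z.2.1 - z.2.2⟫_ℝ : ℝ) : ℂ) * g z
  have hf (z : V × V × V) : HasLineDerivAt ℝ f (f' z) z (e, 0, 0) := by
    have hbz := ((hb.contDiff.differentiable (by simp)).differentiableAt (x := mid z)).hasFDerivAt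
    have hline := ((hbz.hasLineDerivAt (0, e)).mul_const (u z.2.2)).mul_const (conj (w z.2.1))
    rw [HasLineDerivAt]
    simpa only [f, f', mid, Prod.fst_add, Prod.snd_add, Prod.smul_mk, Prod.mk_add_mk, smul_zero,
      add_zero] using hline
  have hfg (z : V × V × V) : f z * g z = quantIntegrand t b u w z := by
    simp only [f, g, mid, quantIntegrand]
    ring
  have hf'g (z : V × V × V) :
      f' z * g z = quantIntegrand t (fun z => fderiv ℝ b z (0, e)) u w z := by
    simp only [f', g, mid, quantIntegrand]
    ring
  have hfg' (z : V × V × V) : f z * g' z = 2 * Real.pi * Complex.I *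
      (((⟪e, z.2.1 - z.2.2⟫_ℝ : ℝ) : ℂ) * quantIntegrand t b u w z) := by
    simp only [← hfg, g']
    ring
  have hparts := integral_mul_eq_neg_of_hasLineDerivAt (μ := (volume : Measure (V × V × V)))
    (f := f) (f' := f') (g := g) (g' := g')
    (by simpa only [hf'g] using integrable_quantIntegrand (hb.fderiv_apply _) hu hw)
    (by simpa only [hfg'] using (integrable_inner_mul_quantIntegrand hb hu hw e).const_mul _)
    (by simpa only [hfg] using integrable_quantIntegrand hb hu hw)
    hf (hasLineDerivAt_fourierChar_inner e)
  simpa only [hfg', hf'g, integral_const_mul, quantForm] using hparts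

theorem inner_mul_quantForm (hb : IsTestFunction b) (hu : IsTestFunction u)
    (hw : IsTestFunction w) (e μ ν : V) :
    ((⟪e, μ - ν⟫_ℝ : ℝ) : ℂ) * quantForm t b u w =
      quantForm t b (fun y => ((⟪e, y - ν⟫_ℝ : ℝ) : ℂ) * u y) w
      - quantForm t b u (fun x => ((⟪e, x - μ⟫_ℝ : ℝ) : ℂ) * w x)
      + ∫ z : V × V × V, ((⟪e, z.2.1 - z.2.2⟫_ℝ : ℝ) : ℂ) * quantIntegrand t b u w z := by
  have hint := (integrable_quantIntegrand (t := t) hb hu hw).const_mul ((⟪e, μ - ν⟫_ℝ : ℝ) : ℂ)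
  have hintu := integrable_quantIntegrand (t := t) hb
    (hu.mul_left (contDiff_ofReal_inner_sub e ν)) hw
  have hintw := integrable_quantIntegrand (t := t) hb hu
    (hw.mul_left (contDiff_ofReal_inner_sub e μ))
  have hsum : ∫ z : V × V × V, ((⟪e, z.2.1 - z.2.2⟫_ℝ : ℝ) : ℂ) * quantIntegrand t b u w z =
      ((⟪e, μ - ν⟫_ℝ : ℝ) : ℂ) * quantForm t b u w
      - quantForm t b (fun y => ((⟪e, y - ν⟫_ℝ : ℝ) : ℂ) * u y) w
      + quantForm t b u (fun x => ((⟪e, x - μ⟫_ℝ : ℝ) : ℂ) * w x) := by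
    simp only [inner_mul_quantIntegrand e μ ν, quantForm]
    rw [← integral_const_mul, ← integral_sub hint hintu]
    exact integral_add (hint.sub hintu) hintw
  rw [hsum]
  ring

theorem enorm_inner_mul_enorm_quantForm_le (hb : IsTestFunction b) (hu : IsTestFunction u)
    (hw : IsTestFunction w) (e μ ν : V) :
    ‖⟪e, μ - ν⟫_ℝ‖ₑ * ‖quantForm t b u w‖ₑ ≤
      ‖quantForm t b (fun y => ((⟪e, y - ν⟫_ℝ : ℝ) : ℂ) * u y) w‖ₑ
      + ‖quantForm t b u (fun x => ((⟪e, x - μ⟫_ℝ : ℝ) : ℂ) * w x)‖ₑ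
      + ‖quantForm t (fun z => fderiv ℝ b z (0, e)) u w‖ₑ := by
  have hpi : 1 ≤ ‖(2 * Real.pi * Complex.I : ℂ)‖ₑ := by
    rw [← ofReal_norm, ENNReal.one_le_ofReal, norm_mul, norm_mul, Complex.norm_I, mul_one,
      Complex.norm_ofNat, Complex.norm_real, Real.norm_of_nonneg Real.pi_nonneg]
    linarith [Real.pi_gt_three]
  have hcomm : ‖∫ z : V × V × V, ((⟪e, z.2.1 - z.2.2⟫_ℝ : ℝ) : ℂ) * quantIntegrand t b u w z‖ₑ
      ≤ ‖quantForm t (fun z => fderiv ℝ b z (0, e)) u w‖ₑ := by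
    rw [← enorm_neg (quantForm t _ u w),
      ← two_pi_I_mul_integral_inner_mul_quantIntegrand hb hu hw, enorm_mul]
    exact le_mul_of_one_le_left' hpi
  calc _ = ‖((⟪e, μ - ν⟫_ℝ : ℝ) : ℂ) * quantForm t b u w‖ₑ := by
        rw [enorm_mul, enorm_eq_nnnorm, enorm_eq_nnnorm ((⟪e, μ - ν⟫_ℝ : ℝ) : ℂ),
          Complex.nnnorm_real]
    _ ≤ _ := by
        rw [inner_mul_quantForm hb hu hw e μ ν]
        exact (enorm_add_le _ _).trans (add_le_add enorm_sub_le hcomm)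

theorem eLpNorm_inner_weight_mul_le (he : ‖e‖ ≤ 1)
    (hu : Function.support u ⊆ Metric.closedBall ν 1) :
    eLpNorm (fun y => ((⟪e, y - ν⟫_ℝ : ℝ) : ℂ) * u y) 2 ≤ eLpNorm u 2 := by
  refine eLpNorm_mono fun y => ?_
  by_cases hy : y ∈ Function.support u
  · have hyν : ‖y - ν‖ ≤ 1 := mem_closedBall_iff_norm.1 (hu hy)
    rw [norm_mul, Complex.norm_real]
    exact mul_le_of_le_one_left (norm_nonneg _)
      ((norm_inner_le_norm e (y - ν)).trans (mul_le_one₀ he (norm_nonneg _) hyν))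
  · rw [Function.notMem_support.1 hy, mul_zero]

variable (V) in
theorem exists_pow_enorm_sub_mul_enorm_quantForm_le (M : ℕ) :
    ∃ C : ℝ≥0, ∀ t ∈ Set.Icc (0 : ℝ) 1, ∀ (b : V × V → ℂ) (S : ℝ≥0), IsTestFunction b →
      DerivBoundOn (Module.finrank ℝ V + 1 + M) S b Set.univ →
      ∀ (μ ν : V) (u w : V → ℂ), IsTestFunction u → IsTestFunction w →
      Function.support u ⊆ Metric.closedBall ν 1 → Function.support w ⊆ Metric.closedBall μ 1 →
      ‖μ - ν‖ₑ ^ M * ‖quantForm t b u w‖ₑ ≤ C * S * (eLpNorm u 2 * eLpNorm w 2) := by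
  induction M with
  | zero =>
    simpa only [pow_zero, one_mul] using exists_enorm_quantForm_le_of_support_subset_closedBall V
  | succ M ih =>
    obtain ⟨C, hC⟩ := ih
    refine ⟨3 * C, fun t ht b S hb hB μ ν u w hu hw hus hws => ?_⟩
    let e : V := ‖μ - ν‖⁻¹ • (μ - ν)
    have he : ‖e‖ ≤ 1 := by
      rw [norm_smul, norm_inv, norm_norm]
      exact inv_mul_le_one
    have hinner : ‖⟪e, μ - ν⟫_ℝ‖ₑ = ‖μ - ν‖ₑ := by
      rw [real_inner_smul_left, real_inner_self_eq_norm_mul_norm, ← mul_assoc, inv_mul_mul_self,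
        enorm_norm]
    have hsupp (f g : V → ℂ) : Function.support (fun y => f y * g y) ⊆ Function.support g :=
      Function.support_mul_subset_right f g
    have hBM := hB.mono (m := Module.finrank ℝ V + 1 + M) (by omega) subset_rfl
    calc ‖μ - ν‖ₑ ^ (M + 1) * ‖quantForm t b u w‖ₑ
        = ‖μ - ν‖ₑ ^ M * (‖⟪e, μ - ν⟫_ℝ‖ₑ * ‖quantForm t b u w‖ₑ) := by
          rw [hinner, pow_succ, mul_assoc]
      _ ≤ C * S * (eLpNorm u 2 * eLpNorm w 2) + C * S * (eLpNorm u 2 * eLpNorm w 2)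
          + C * S * (eLpNorm u 2 * eLpNorm w 2) := by
          refine (mul_le_mul_right (enorm_inner_mul_enorm_quantForm_le hb hu hw e μ ν) _).trans ?_
          rw [mul_add, mul_add]
          refine add_le_add (add_le_add ?_ ?_) ?_
          · refine (hC t ht b S hb hBM μ ν _ w (hu.mul_left (contDiff_ofReal_inner_sub e ν)) hw
              ((hsupp _ _).trans hus) hws).trans ?_
            gcongr
            exact eLpNorm_inner_weight_mul_le he hus
          · refine (hC t ht b S hb hBM μ ν u _ hu (hw.mul_left (contDiff_ofReal_inner_sub e μ))
              hus ((hsupp _ _).trans hws)).trans ?_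
            gcongr
            exact eLpNorm_inner_weight_mul_le he hws
          · exact hC t ht _ S (hb.fderiv_apply _) (hB.fderiv_apply hb.contDiff
              (by simpa using he)) μ ν u w hu hw hus hws
      _ = _ := by
          push_cast
          ring

variable (V) in
theorem exists_enorm_quantForm_le_decay (P : ℕ) :
    ∃ C : ℝ≥0, ∀ t ∈ Set.Icc (0 : ℝ) 1, ∀ (b : V × V → ℂ) (S : ℝ≥0), IsTestFunction b →
      DerivBoundOn (Module.finrank ℝ V + 1 + P) S b Set.univ →
      ∀ (μ ν : V) (u w : V → ℂ), IsTestFunction u → IsTestFunction w →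
      Function.support u ⊆ Metric.closedBall ν 1 → Function.support w ⊆ Metric.closedBall μ 1 →
      ‖quantForm t b u w‖ₑ ≤ C * S * decay P (μ - ν) * (eLpNorm u 2 * eLpNorm w 2) := by
  obtain ⟨C₀, hC₀⟩ := exists_enorm_quantForm_le_of_support_subset_closedBall V
  obtain ⟨C₁, hC₁⟩ := exists_pow_enorm_sub_mul_enorm_quantForm_le V P
  refine ⟨2 ^ P * (C₀ + C₁), fun t ht b S hb hB μ ν u w hu hw hus hws => ?_⟩
  let N := eLpNorm u 2 * eLpNorm w 2
  have hzero : ‖quantForm t b u w‖ₑ ≤ (C₀ + C₁) * S * N :=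
    (hC₀ t ht b S hb (hB.mono (by omega) subset_rfl) μ ν u w hu hw hus hws).trans
      (by gcongr; exact le_self_add)
  have hpow : ‖μ - ν‖ₑ ^ P * ‖quantForm t b u w‖ₑ ≤ (C₀ + C₁) * S * N :=
    (hC₁ t ht b S hb hB μ ν u w hu hw hus hws).trans (by gcongr; exact le_add_self)
  convert le_mul_decay hzero hpow using 1
  push_cast
  ring

end Commutator

section BlockDecomposition

theorem lintegral_prod_sub_mul_mul_le {G : Type*} [AddCommGroup G] [MeasurableSpace G]
    [MeasurableAdd₂ G] [MeasurableNeg G] {μ : Measure G} [SFinite μ] [μ.IsAddRightInvariant]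
    {h A B : G → ℝ≥0∞} (hh : Measurable h) (hA : Measurable A) (hB : Measurable B) :
    ∫⁻ p : G × G, h (p.2 - p.1) * (A p.1 * B p.2) ∂μ.prod μ
      ≤ (∫⁻ σ, h σ ∂μ) * (eLpNorm A 2 μ * eLpNorm B 2 μ) := by
  have hmeas : Measurable fun p : G × G => h p.2 * (A p.1 * B (p.1 + p.2)) := by fun_prop
  calc ∫⁻ p : G × G, h (p.2 - p.1) * (A p.1 * B p.2) ∂μ.prod μ
      = ∫⁻ x, ∫⁻ σ, h σ * (A x * B (x + σ)) ∂μ ∂μ := by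
        rw [lintegral_prod _ (by fun_prop)]
        refine lintegral_congr fun x => ?_
        rw [← lintegral_add_right_eq_self _ x]
        simp only [add_comm _ x, add_sub_cancel_left]
    _ = ∫⁻ σ, h σ * ∫⁻ x, A (x + 0) * B (x + σ) ∂μ ∂μ := by
        rw [lintegral_lintegral_swap hmeas.aemeasurable]
        simp only [add_zero]
        exact lintegral_congr fun σ => lintegral_const_mul _ (by fun_prop)
    _ ≤ _ := lintegral_mul_lintegral_translates_le hh hA hB (fun _ => 0) id

theorem exists_isTestFunction_integral_eq_one (V : Type*) [NormedAddCommGroup V]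
    [InnerProductSpace ℝ V] [FiniteDimensional ℝ V] [MeasurableSpace V] [BorelSpace V] :
    ∃ φ : V → ℂ, IsTestFunction φ ∧ (∀ x, conj (φ x) = φ x) ∧ ∫ x, φ x = 1 ∧
      Function.support φ ⊆ Metric.closedBall 0 1 := by
  let φ : ContDiffBump (0 : V) := ⟨1 / 2, 1, by norm_num, by norm_num⟩
  refine ⟨fun x => (φ.normed volume x : ℂ), ⟨?_, ?_⟩, fun x => Complex.conj_ofReal _, ?_, ?_⟩
  · exact Complex.ofRealCLM.contDiff.comp φ.contDiff_normed
  · exact φ.hasCompactSupport_normed.comp_left Complex.ofReal_zero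
  · rw [integral_complex_ofReal, φ.integral_normed, Complex.ofReal_one]
  · refine (Function.support_comp_subset Complex.ofReal_zero _).trans ?_
    rw [φ.support_normed_eq]
    exact Metric.ball_subset_closedBall

theorem integrable_uncurry_mul_of_integral_norm_eq {X Z : Type*} [MeasurableSpace X]
    [MeasurableSpace Z] {μ : Measure X} {ν : Measure Z} [SFinite μ] [SFinite ν] {k : X → Z → ℂ}
    {q : Z → ℂ} {c : ℝ} (hk : AEStronglyMeasurable (Function.uncurry k) (μ.prod ν))
    (hint : ∀ z, Integrable (fun x => k x z) μ) (hc : ∀ z, ∫ x, ‖k x z‖ ∂μ = c)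
    (hq : Integrable q ν) :
    Integrable (Function.uncurry fun x z => k x z * q z) (μ.prod ν) := by
  have hmeas : AEStronglyMeasurable (Function.uncurry fun x z => k x z * q z) (μ.prod ν) :=
    hk.mul hq.aestronglyMeasurable.comp_snd
  refine (integrable_prod_iff' hmeas).2 ⟨ae_of_all _ fun z => (hint z).mul_const (q z), ?_⟩
  simp only [Function.uncurry_apply_pair, norm_mul, integral_mul_const, hc]
  exact hq.norm.const_mul c

section Block

variable {E : Type*} [NormedAddCommGroup E] {φ u : E → ℂ}

/-- The part of `u` localized near `ν` by the window `φ`. -/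
def block (φ u : E → ℂ) (ν y : E) : ℂ := φ (y - ν) * u y

theorem isTestFunction_block [NormedSpace ℝ E] (hφ : ContDiff ℝ ∞ φ) (hu : IsTestFunction u)
    (ν : E) : IsTestFunction (block φ u ν) :=
  hu.mul_left (hφ.comp (contDiff_id.sub contDiff_const))

theorem support_block_subset (u : E → ℂ) (hφ : Function.support φ ⊆ Metric.closedBall 0 1)
    (ν : E) : Function.support (block φ u ν) ⊆ Metric.closedBall ν 1 := fun y hy => by
  simpa only [mem_closedBall_iff_norm, sub_zero] using hφ (left_ne_zero_of_mul hy)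

theorem support_block_subset_support (φ u : E → ℂ) (ν : E) :
    Function.support (block φ u ν) ⊆ Function.support u := fun _ hy => right_ne_zero_of_mul hy

theorem continuous_uncurry_block (hφ : Continuous φ) (hu : Continuous u) :
    Continuous (Function.uncurry (block φ u)) := by
  unfold block
  fun_prop

end Block

variable {V : Type*} [NormedAddCommGroup V] [InnerProductSpace ℝ V] [FiniteDimensional ℝ V]
  [MeasurableSpace V] [BorelSpace V] {t : ℝ} {b : V × V → ℂ} {u w φ : V → ℂ}

theorem measurable_eLpNorm_block (hφ : Continuous φ) (hu : Continuous u) :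
    Measurable fun ν => eLpNorm (block φ u ν) 2 := by
  have hmeas : Measurable fun ν => ∫⁻ y, ‖block φ u ν y‖ₑ ^ (2 : ℝ) :=
    ((continuous_uncurry_block hφ hu).measurable.enorm.pow_const 2).lintegral_prod_right'
  simpa only [eLpNorm_eq_lintegral_rpow_enorm_toReal two_ne_zero ENNReal.ofNat_ne_top,
    ENNReal.toReal_ofNat] using hmeas.pow_const (1 / 2)

theorem eLpNorm_eLpNorm_block (hφ : Continuous φ) (hu : Continuous u) :
    eLpNorm (fun ν => eLpNorm (block φ u ν) 2) 2 = eLpNorm φ 2 * eLpNorm u 2 := by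
  refine (ENNReal.pow_right_strictMono two_ne_zero).injective ?_
  have hmeas : Measurable (Function.uncurry fun ν y => ‖block φ u ν y‖ₑ ^ 2) :=
    (continuous_uncurry_block hφ hu).measurable.enorm.pow_const 2
  simp only [mul_pow, sq_eLpNorm_two, enorm_eq_self]
  rw [lintegral_lintegral_swap hmeas.aemeasurable, ← lintegral_const_mul _ (by fun_prop)]
  refine lintegral_congr fun y => ?_
  simp only [block, enorm_mul, mul_pow]
  have hφm := hφ.measurable
  rw [lintegral_mul_const _ (by fun_prop), lintegral_sub_left_eq_self (fun x => ‖φ x‖ₑ ^ 2) y]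

theorem decay_mul_eLpNorm_block_le {ρ : ℝ≥0} (hφ : Function.support φ ⊆ Metric.closedBall 0 1)
    (hdist : ∀ y ∈ Function.support u, ∀ x ∈ Function.support w, ρ ≤ ‖x - y‖₊) (M : ℕ)
    (ν μ : V) : decay M (μ - ν) * (eLpNorm (block φ u ν) 2 * eLpNorm (block φ w μ) 2)
      ≤ (3 ^ M * ((1 + ρ) ^ M)⁻¹ : ℝ≥0) * (eLpNorm (block φ u ν) 2 * eLpNorm (block φ w μ) 2) := by
  rcases (Function.support (block φ u ν)).eq_empty_or_nonempty with hu | ⟨y, hy⟩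
  · simp only [Function.support_eq_empty_iff.1 hu, eLpNorm_zero, zero_mul, mul_zero, le_refl]
  rcases (Function.support (block φ w μ)).eq_empty_or_nonempty with hw | ⟨x, hx⟩
  · simp only [Function.support_eq_empty_iff.1 hw, eLpNorm_zero, mul_zero, le_refl]
  refine mul_le_mul_left (decay_le_of_le_nnnorm_add_two M ?_) _
  have hyν := mem_closedBall_iff_norm.1 (support_block_subset u hφ ν hy)
  have hxμ := mem_closedBall_iff_norm'.1 (support_block_subset w hφ μ hx)
  have hxy : ρ ≤ ‖x - y‖ := hdist y (support_block_subset_support φ u ν hy) x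
    (support_block_subset_support φ w μ hx)
  have htri := norm_add₃_le (a := x - μ) (b := μ - ν) (c := ν - y)
  rw [sub_add_sub_cancel, sub_add_sub_cancel, norm_sub_rev x μ, norm_sub_rev ν y] at htri
  rw [← NNReal.coe_le_coe]
  push_cast
  linarith

theorem integrable_windowed_quantIntegrand (hb : IsTestFunction b) (hu : IsTestFunction u)
    (hw : IsTestFunction w) (hφ : IsTestFunction φ) :
    Integrable (Function.uncurry fun (p : V × V) (z : V × V × V) =>
      (φ (z.2.2 - p.1) * φ (z.2.1 - p.2)) * quantIntegrand t b u w z) := by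
  have hcφ := hφ.continuous
  have hwindow (x y : V) : Integrable fun p : V × V => φ (y - p.1) * φ (x - p.2) :=
    (hφ.integrable.comp_sub_left y).mul_prod (hφ.integrable.comp_sub_left x)
  have hnorm (x y : V) : ∫ p : V × V, ‖φ (y - p.1) * φ (x - p.2)‖ = (∫ v, ‖φ v‖) * ∫ v, ‖φ v‖ := by
    simp only [norm_mul]
    refine (integral_prod_mul (μ := (volume : Measure V)) (ν := (volume : Measure V))
      (fun ν => ‖φ (y - ν)‖) fun μ => ‖φ (x - μ)‖).trans ?_
    rw [integral_sub_left_eq_self fun v => ‖φ v‖, integral_sub_left_eq_self fun v => ‖φ v‖]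
  exact integrable_uncurry_mul_of_integral_norm_eq (Continuous.aestronglyMeasurable (by fun_prop))
    (fun z => hwindow z.2.1 z.2.2) (fun z => hnorm z.2.1 z.2.2)
    (integrable_quantIntegrand hb hu hw)

theorem quantForm_eq_integral_block (hb : IsTestFunction b) (hu : IsTestFunction u)
    (hw : IsTestFunction w) (hφ : IsTestFunction φ) (hφr : ∀ x, conj (φ x) = φ x)
    (hφ1 : ∫ x, φ x = 1) :
    quantForm t b u w = ∫ p : V × V, quantForm t b (block φ u p.1) (block φ w p.2) := by
  have hblock (p : V × V) (z : V × V × V) :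
      quantIntegrand t b (block φ u p.1) (block φ w p.2) z
        = (φ (z.2.2 - p.1) * φ (z.2.1 - p.2)) * quantIntegrand t b u w z := by
    simp only [quantIntegrand, block, map_mul, hφr]
    ring
  have hwindow (x y : V) : ∫ p : V × V, φ (y - p.1) * φ (x - p.2) = 1 := by
    refine (integral_prod_mul (μ := (volume : Measure V)) (ν := (volume : Measure V))
      (fun ν => φ (y - ν)) fun μ => φ (x - μ)).trans ?_
    rw [integral_sub_left_eq_self, integral_sub_left_eq_self, hφ1, one_mul]
  have hint := integrable_windowed_quantIntegrand (t := t) hb hu hw hφ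
  simp only [quantForm, hblock]
  rw [integral_integral_swap hint]
  simp only [integral_mul_const, hwindow, one_mul]

end BlockDecomposition

section CalderonVaillancourt

variable (V : Type*) [NormedAddCommGroup V] [InnerProductSpace ℝ V] [FiniteDimensional ℝ V]
  [MeasurableSpace V] [BorelSpace V]

theorem exists_enorm_quantForm_le (M : ℕ) :
    ∃ C : ℝ≥0, ∀ t ∈ Set.Icc (0 : ℝ) 1, ∀ (b : V × V → ℂ) (S ρ : ℝ≥0), IsTestFunction b →
      DerivBoundOn (2 * (Module.finrank ℝ V + 1) + M) S b Set.univ →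
      ∀ u w : V → ℂ, IsTestFunction u → IsTestFunction w →
      (∀ y ∈ Function.support u, ∀ x ∈ Function.support w, ρ ≤ ‖x - y‖₊) →
      ‖quantForm t b u w‖ₑ ≤ C * S * ((1 + ρ) ^ M)⁻¹ * (eLpNorm u 2 * eLpNorm w 2) := by
  let n := Module.finrank ℝ V + 1
  obtain ⟨C, hC⟩ := exists_enorm_quantForm_le_decay V (n + M)
  obtain ⟨φ, hφ, hφr, hφ1, hφs⟩ := exists_isTestFunction_integral_eq_one V
  have hD : ∫⁻ σ : V, decay n σ < ⊤ := lintegral_decay_lt_top volume (Nat.lt_succ_self _)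
  refine ⟨C * 3 ^ M * (∫⁻ σ : V, decay n σ).toNNReal * (eLpNorm φ 2).toNNReal ^ 2,
    fun t ht b S ρ hb hB u w hu hw hdist => ?_⟩
  let K : ℝ≥0 := C * S * (3 ^ M * ((1 + ρ) ^ M)⁻¹)
  let U (ν : V) := eLpNorm (block φ u ν) 2
  let W (μ : V) := eLpNorm (block φ w μ) 2
  have hpair (p : V × V) : ‖quantForm t b (block φ u p.1) (block φ w p.2)‖ₑ
      ≤ K * (decay n (p.2 - p.1) * (U p.1 * W p.2)) := by
    refine (hC t ht b S hb (hB.mono (by omega) subset_rfl) p.2 p.1 _ _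
      (isTestFunction_block hφ.contDiff hu p.1) (isTestFunction_block hφ.contDiff hw p.2)
      (support_block_subset u hφs p.1) (support_block_subset w hφs p.2)).trans ?_
    have hfar := decay_mul_eLpNorm_block_le hφs hdist M p.1 p.2
    calc C * S * decay (n + M) (p.2 - p.1) * (U p.1 * W p.2)
        = C * S * decay n (p.2 - p.1) * (decay M (p.2 - p.1) * (U p.1 * W p.2)) := by
          rw [decay_add]; ring
      _ ≤ C * S * decay n (p.2 - p.1) * ((3 ^ M * ((1 + ρ) ^ M)⁻¹ : ℝ≥0) *
            (U p.1 * W p.2)) := by gcongr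
      _ = _ := by simp only [K, ENNReal.coe_mul]; ring
  rw [quantForm_eq_integral_block hb hu hw hφ hφr hφ1]
  refine (enorm_integral_le_lintegral_enorm _).trans ((lintegral_mono hpair).trans ?_)
  have hUm : Measurable U := measurable_eLpNorm_block hφ.continuous hu.continuous
  have hWm : Measurable W := measurable_eLpNorm_block hφ.continuous hw.continuous
  have hhm : Measurable (decay n : V → ℝ≥0∞) := measurable_decay n
  rw [lintegral_const_mul _ (by fun_prop)]
  refine (mul_le_mul_right (lintegral_prod_sub_mul_mul_le hhm hUm hWm) K).trans_eq ?_
  rw [eLpNorm_eLpNorm_block hφ.continuous hu.continuous,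
    eLpNorm_eLpNorm_block hφ.continuous hw.continuous]
  simp only [K, ENNReal.coe_mul, ENNReal.coe_pow, ENNReal.coe_toNNReal hD.ne,
    ENNReal.coe_toNNReal hφ.memLp_two.eLpNorm_ne_top]
  ring

end CalderonVaillancourt

section Duality

theorem eLpNorm_two_le_of_forall_tendsto {X : Type*} [MeasurableSpace X] {μ : Measure X}
    {F : ℕ → X → ℂ} {G : X → ℂ} {C : ℝ≥0∞} (hF : ∀ k, Measurable (F k))
    (hG : ∀ x, G x ≠ 0 → Filter.Tendsto (fun k => F k x) Filter.atTop (nhds (G x)))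
    (hC : ∀ k, eLpNorm (F k) 2 μ ≤ C) : eLpNorm G 2 μ ≤ C := by
  rw [← ENNReal.pow_le_pow_left_iff two_ne_zero, sq_eLpNorm_two]
  have hle (x : X) : ‖G x‖ₑ ^ 2 ≤ Filter.liminf (fun k => ‖F k x‖ₑ ^ 2) Filter.atTop := by
    rcases eq_or_ne (G x) 0 with hx | hx
    · simp only [hx, enorm_zero, ne_eq, two_ne_zero, not_false_eq_true, zero_pow, zero_le]
    · exact (ENNReal.Tendsto.pow (hG x hx).enorm).liminf_eq.ge
  refine (lintegral_mono hle).trans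
    ((lintegral_liminf_le fun k => (hF k).enorm.pow_const 2).trans ?_)
  refine Filter.liminf_le_of_frequently_le' (Filter.Frequently.of_forall fun k => ?_)
  rw [← sq_eLpNorm_two]
  exact ENNReal.pow_le_pow_left (hC k)

theorem enorm_integral_mul_conj_self {X : Type*} [MeasurableSpace X] {μ : Measure X} {g : X → ℂ}
    (hg : MemLp g 2 μ) : ‖∫ x, g x * conj (g x) ∂μ‖ₑ = eLpNorm g 2 μ ^ 2 := by
  have hint : Integrable (fun x => ‖g x‖ ^ 2) μ := hg.integrable_norm_pow two_ne_zero
  have hreal : ∫ x, g x * conj (g x) ∂μ = (∫ x, ‖g x‖ ^ 2 ∂μ : ℝ) := by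
    rw [← integral_complex_ofReal]
    simp only [Complex.mul_conj', Complex.ofReal_pow]
  rw [hreal, ← ofReal_norm, Complex.norm_real,
    Real.norm_of_nonneg (integral_nonneg fun x => sq_nonneg _),
    ofReal_integral_eq_lintegral_ofReal hint (ae_of_all _ fun x => sq_nonneg _), sq_eLpNorm_two]
  simp only [ENNReal.ofReal_pow (norm_nonneg _), ofReal_norm]

theorem le_of_sq_le_mul {a M : ℝ≥0∞} (ha : a ≠ ⊤) (h : a ^ 2 ≤ M * a) : a ≤ M := by
  rcases eq_or_ne a 0 with rfl | ha0
  · exact zero_le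
  · rwa [sq, ENNReal.mul_le_mul_iff_left ha0 ha] at h

variable {E : Type*} [NormedAddCommGroup E] [NormedSpace ℝ E] [FiniteDimensional ℝ E]
  [MeasurableSpace E] [BorelSpace E] {μ : Measure E} [IsFiniteMeasureOnCompacts μ]

theorem eLpNorm_two_le_of_forall_isTestFunction {T : E → ℂ} (hT : ContDiff ℝ ∞ T) {M : ℝ≥0∞}
    (h : ∀ w, IsTestFunction w → Function.support w ⊆ Function.support T →
      ‖∫ x, T x * conj (w x) ∂μ‖ₑ ≤ M * eLpNorm w 2 μ) : eLpNorm T 2 μ ≤ M := by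
  let χ (k : ℕ) : ContDiffBump (0 : E) := ⟨k + 1, k + 2, by positivity, by linarith⟩
  have hχ (k : ℕ) : ContDiff ℝ ∞ fun x => (χ k x : ℂ) :=
    Complex.ofRealCLM.contDiff.comp (χ k).contDiff
  let g (k : ℕ) (x : E) : ℂ := χ k x * T x
  have hg (k : ℕ) : IsTestFunction (g k) :=
    IsTestFunction.mul_right ⟨hχ k, (χ k).hasCompactSupport.comp_left Complex.ofReal_zero⟩ hT
  refine eLpNorm_two_le_of_forall_tendsto (F := g) (fun k => (hg k).continuous.measurable)
    (fun x _ => ?_) fun k => ?_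
  · obtain ⟨k₀, hk₀⟩ := exists_nat_ge ‖x‖
    refine tendsto_const_nhds.congr' ?_
    filter_upwards [Filter.eventually_ge_atTop k₀] with k hk
    have hx : x ∈ Metric.closedBall 0 (χ k).rIn := by
      rw [mem_closedBall_zero_iff]
      have : (k₀ : ℝ) ≤ k := Nat.cast_le.2 hk
      change ‖x‖ ≤ k + 1
      linarith
    simp only [g, (χ k).one_of_mem_closedBall hx, Complex.ofReal_one, one_mul]
  · have hpair : ∫ x, T x * conj (χ k x * g k x) ∂μ = ∫ x, g k x * conj (g k x) ∂μ := by
      refine integral_congr_ae (ae_of_all _ fun x => ?_)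
      simp only [g, map_mul, Complex.conj_ofReal]
      ring
    have hnorm : eLpNorm (fun x => χ k x * g k x) 2 μ ≤ eLpNorm (g k) 2 μ := by
      refine eLpNorm_mono fun x => ?_
      rw [norm_mul, Complex.norm_real, Real.norm_of_nonneg (χ k).nonneg]
      exact mul_le_of_le_one_left (norm_nonneg _) (χ k).le_one
    have hdual := h _ ((hg k).mul_left (hχ k)) fun x hx =>
      right_ne_zero_of_mul (right_ne_zero_of_mul hx)
    rw [hpair, enorm_integral_mul_conj_self (hg k).memLp_two] at hdual
    exact le_of_sq_le_mul (hg k).memLp_two.eLpNorm_ne_top (hdual.trans (by gcongr))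

end Duality

section ParametricIntegral

variable {P E F : Type*} [NormedAddCommGroup P] [NormedSpace ℝ P] [NormedAddCommGroup E]
  [NormedSpace ℝ E] [FiniteDimensional ℝ E] [MeasurableSpace E] [BorelSpace E]
  [NormedAddCommGroup F] [NormedSpace ℝ F]

theorem contDiff_integral_of_forall_notMem_eq_zero {μ : Measure E} [μ.IsAddHaarMeasure]
    {g : P → E → F} {k : Set E} (hk : IsCompact k)
    (hgk : ∀ p, ∀ x ∉ k, g p x = 0) (hg : ContDiff ℝ ∞ (Function.uncurry g)) :
    ContDiff ℝ ∞ fun p => ∫ x, g p x ∂μ := by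
  have := FiniteDimensional.proper ℝ E
  have hconv := contDiffOn_convolution_right_with_param (μ := μ) (n := ⊤)
    (f := fun _ : E => (1 : ℝ)) (ContinuousLinearMap.lsmul ℝ ℝ) isOpen_univ hk
    (fun p x _ hx => hgk p x hx) (locallyIntegrable_const 1) hg.contDiffOn
  rw [Set.univ_prod_univ, contDiffOn_univ] at hconv
  have hzero := hconv.comp (contDiff_id.prodMk (contDiff_const (c := (0 : E))))
  simpa only [Function.comp_def, id_eq, convolution_def, ContinuousLinearMap.lsmul_apply, one_smul,
    integral_sub_left_eq_self] using hzero

end ParametricIntegral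

section Fubini

theorem integral_prod_prod_left_comm {X Y Z F : Type*} [MeasurableSpace X] [MeasurableSpace Y]
    [MeasurableSpace Z] [NormedAddCommGroup F] [NormedSpace ℝ F] {μ : Measure X} {ν : Measure Y}
    {κ : Measure Z} [SFinite μ] [SFinite ν] [SFinite κ] {f : X × Y × Z → F}
    (hf : Integrable f (μ.prod (ν.prod κ))) :
    ∫ p, f p ∂μ.prod (ν.prod κ) = ∫ y, ∫ x, ∫ z, f (x, y, z) ∂κ ∂μ ∂ν := by
  have hassoc : Integrable (fun p : (X × Y) × Z => f (p.1.1, p.1.2, p.2)) ((μ.prod ν).prod κ) :=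
    (measurePreserving_prodAssoc μ ν κ).integrable_comp_of_integrable hf
  have hinner : ∀ᵐ x ∂μ, ∫ q, f (x, q) ∂ν.prod κ = ∫ y, ∫ z, f (x, y, z) ∂κ ∂ν :=
    hf.prod_right_ae.mono fun x hx => integral_prod _ hx
  rw [integral_prod _ hf, integral_congr_ae hinner,
    integral_integral_swap hassoc.integral_prod_left]

end Fubini

section QuantOp

variable {V : Type*} [NormedAddCommGroup V] [InnerProductSpace ℝ V] [FiniteDimensional ℝ V]
  [MeasurableSpace V] [BorelSpace V]

/-- The `t`-quantization of the symbol `b`, with the momentum scaled so that the phase is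
`exp (2πi ⟪ξ, x - y⟫)`. -/
def quantOp (t : ℝ) (b : V × V → ℂ) (v : V → ℂ) (x : V) : ℂ :=
  ∫ ξ, ∫ y, b (t • x + (1 - t) • y, ξ) * 𝐞 ⟪ξ, x - y⟫_ℝ * v y

variable {t : ℝ} {b : V × V → ℂ} {v w : V → ℂ}

theorem contDiff_quantOp (hb : IsTestFunction b) (hv : IsTestFunction v) :
    ContDiff ℝ ∞ (quantOp t b v) := by
  let k := (Prod.snd '' tsupport b) ×ˢ tsupport v
  let g (x : V) (p : V × V) : ℂ :=
    b (t • x + (1 - t) • p.2, p.1) * 𝐞 ⟪p.1, x - p.2⟫_ℝ * v p.2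
  have hk : IsCompact k :=
    (hb.hasCompactSupport.isCompact.image continuous_snd).prod hv.hasCompactSupport.isCompact
  have hgk (x : V) : Function.support (g x) ⊆ k := fun p hp => by
    have hp' := Function.mem_support.1 hp
    simp only [g, mul_ne_zero_iff] at hp'
    exact ⟨⟨_, subset_tsupport b hp'.1.1, rfl⟩, subset_tsupport v hp'.2⟩
  have hg : ContDiff ℝ ∞ (Function.uncurry g) := by
    have hx : ContDiff ℝ ∞ fun z : V × V × V => z.1 := contDiff_fst
    have hξ : ContDiff ℝ ∞ fun z : V × V × V => z.2.1 := contDiff_fst.comp contDiff_snd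
    have hy : ContDiff ℝ ∞ fun z : V × V × V => z.2.2 := contDiff_snd.comp contDiff_snd
    have hsymbol := hb.contDiff.comp (((hx.const_smul t).add (hy.const_smul (1 - t))).prodMk hξ)
    have hphase := contDiff_coe_fourierChar.comp (hξ.inner ℝ (hx.sub hy))
    exact (hsymbol.mul hphase).mul (hv.contDiff.comp hy)
  have hint (x : V) : Integrable (g x) ((volume : Measure V).prod volume) :=
    ((hg.comp (contDiff_const.prodMk contDiff_id)).continuous).integrable_of_hasCompactSupport
      (.of_support_subset_isCompact hk (hgk x))
  have hfubini : quantOp t b v = fun x => ∫ p, g x p ∂(volume : Measure V).prod volume :=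
    funext fun x => (integral_prod (μ := (volume : Measure V)) (ν := (volume : Measure V)) _
      (hint x)).symm
  rw [hfubini]
  exact contDiff_integral_of_forall_notMem_eq_zero hk
    (fun x p hp => Function.notMem_support.1 fun h => hp (hgk x h)) hg

theorem quantForm_eq_integral_quantOp (hb : IsTestFunction b) (hv : IsTestFunction v)
    (hw : IsTestFunction w) :
    quantForm t b v w = ∫ x, quantOp t b v x * conj (w x) := by
  refine (integral_prod_prod_left_comm (integrable_quantIntegrand hb hv hw)).trans ?_
  simp only [quantIntegrand, quantOp, integral_mul_const]

theorem exists_eLpNorm_mul_quantOp_le_of_isTestFunction (V : Type*) [NormedAddCommGroup V]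
    [InnerProductSpace ℝ V] [FiniteDimensional ℝ V] [MeasurableSpace V] [BorelSpace V] (M : ℕ) :
    ∃ C : ℝ≥0, ∀ t ∈ Set.Icc (0 : ℝ) 1, ∀ (b : V × V → ℂ) (S B ρ : ℝ≥0), IsTestFunction b →
      DerivBoundOn (2 * (Module.finrank ℝ V + 1) + M) S b Set.univ →
      ∀ v ζ : V → ℂ, IsTestFunction v → ContDiff ℝ ∞ ζ → (∀ x, ‖ζ x‖ ≤ B) →
      (∀ y ∈ Function.support v, ∀ x ∈ Function.support ζ, ρ ≤ ‖x - y‖₊) →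
      eLpNorm (fun x => ζ x * quantOp t b v x) 2
        ≤ B * (C * S * ((1 + ρ) ^ M)⁻¹ : ℝ≥0) * eLpNorm v 2 := by
  obtain ⟨C, hC⟩ := exists_enorm_quantForm_le V M
  refine ⟨C, fun t ht b S B ρ hb hB v ζ hv hζ hζB hdist => ?_⟩
  refine eLpNorm_two_le_of_forall_isTestFunction (hζ.mul (contDiff_quantOp hb hv))
    fun w hw _ => ?_
  have hζw : IsTestFunction fun x => conj (ζ x) * w x :=
    hw.mul_left (Complex.conjCLE.contDiff.comp hζ)
  have hpair : ∫ x, ζ x * quantOp t b v x * conj (w x)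
      = quantForm t b v fun x => conj (ζ x) * w x := by
    rw [quantForm_eq_integral_quantOp hb hv hζw]
    refine integral_congr_ae (ae_of_all _ fun x => ?_)
    simp only [map_mul, Complex.conj_conj]
    ring
  have hnorm : eLpNorm (fun x => conj (ζ x) * w x) 2 ≤ B * eLpNorm w 2 := by
    refine eLpNorm_le_nnreal_smul_eLpNorm_of_ae_le_mul (ae_of_all _ fun x => ?_) 2
    rw [nnnorm_mul, RCLike.nnnorm_conj]
    gcongr
    exact hζB x
  rw [hpair]
  refine (hC t ht b S ρ hb hB v _ hv hζw fun y hy x hx => hdist y hy x fun h => hx ?_).trans ?_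
  · simp only [h, map_zero, zero_mul]
  · calc _ ≤ C * S * ↑((1 + ρ) ^ M)⁻¹ * (eLpNorm v 2 * (B * eLpNorm w 2)) := by gcongr
      _ = _ := by push_cast; ring

end QuantOp

section Truncation

variable {V : Type*} [NormedAddCommGroup V] [InnerProductSpace ℝ V]

/-- The slab of width `4` around the hyperplane `⟪e, x⟫ = m`, with unrestricted momentum. -/
def slab (e : V) (m : ℝ) : Set (V × V) := {z | ⟪e, z.1⟫_ℝ ∈ Metric.closedBall m 2}

/-- A cutoff to `slab e m` that is compactly supported for `ε ≠ 0` and exhausts the slab around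
`⟪e, x⟫ = m` where `θ (⟪e, x⟫ - m) = 1` as `ε → 0`. -/
def slabCutoff (θ : ℝ → ℂ) (χ : V → ℂ) (e : V) (m ε : ℝ) (z : V × V) : ℂ :=
  θ (⟪e, z.1⟫_ℝ - m) * (χ (ε • z.1) * χ (ε • z.2))

variable {θ : ℝ → ℂ} {χ : V → ℂ} {e : V} {m ε : ℝ}

theorem tsupport_slabCutoff_subset (hθ : tsupport θ ⊆ Metric.closedBall 0 2) :
    tsupport (slabCutoff θ χ e m ε) ⊆ slab e m := by
  refine closure_minimal (fun z hz => ?_)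
    (Metric.isClosed_closedBall.preimage (continuous_const.inner continuous_fst))
  have h := hθ (subset_tsupport θ (left_ne_zero_of_mul hz))
  rwa [mem_closedBall_zero_iff, ← mem_closedBall_iff_norm] at h

theorem contDiff_slabCutoff (hθ : ContDiff ℝ ∞ θ) (hχ : ContDiff ℝ ∞ χ) :
    ContDiff ℝ ∞ (slabCutoff θ χ e m ε) :=
  (hθ.comp ((contDiff_const.inner ℝ contDiff_fst).sub contDiff_const)).mul
    ((hχ.comp (contDiff_fst.const_smul ε)).mul (hχ.comp (contDiff_snd.const_smul ε)))

theorem isTestFunction_slabCutoff (hθ : ContDiff ℝ ∞ θ) (hχ : IsTestFunction χ) (hε : ε ≠ 0) :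
    IsTestFunction (slabCutoff θ χ e m ε) := by
  refine ⟨contDiff_slabCutoff hθ hχ.contDiff, ?_⟩
  have hχε : IsCompact (tsupport fun x => χ (ε • x)) :=
    hχ.hasCompactSupport.comp_homeomorph (Homeomorph.smulOfNeZero ε hε)
  refine .of_support_subset_isCompact (hχε.prod hχε) fun z hz => ?_
  have hz' := right_ne_zero_of_mul (Function.mem_support.1 hz)
  exact ⟨subset_tsupport _ (left_ne_zero_of_mul hz'), subset_tsupport _ (right_ne_zero_of_mul hz')⟩

theorem derivBoundOn_slabCutoff {n : ℕ} {A B : ℝ≥0} (hθ : ContDiff ℝ ∞ θ) (hχ : ContDiff ℝ ∞ χ)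
    (hA : DerivBoundOn n A θ Set.univ) (hB : DerivBoundOn n B χ Set.univ) (he : ‖e‖ ≤ 1)
    (hε : |ε| ≤ 1) :
    DerivBoundOn n (2 ^ n * A * (2 ^ n * B * B)) (slabCutoff θ χ e m ε) Set.univ := by
  have hfst := ContinuousLinearMap.norm_fst_le ℝ V V
  have hsnd := ContinuousLinearMap.norm_snd_le ℝ V V
  have hinner : ‖(innerSL ℝ e).comp (.fst ℝ V V)‖ ≤ 1 :=
    (ContinuousLinearMap.opNorm_comp_le _ _).trans
      (mul_le_one₀ (by rwa [innerSL_apply_norm]) (norm_nonneg _) hfst)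
  have hsmul {L : V × V →L[ℝ] V} (hL : ‖L‖ ≤ 1) : ‖ε • L‖ ≤ 1 :=
    (ContinuousLinearMap.opNorm_smul_le ε L).trans (mul_le_one₀ hε (norm_nonneg _) hL)
  have hθm : ContDiff ℝ ∞ fun s : ℝ => θ (s + -m) := hθ.comp (contDiff_id.add contDiff_const)
  have hθL := (hA.comp_add_right (-m)).comp_continuousLinearMap hθm hinner
  have hχfst := hB.comp_continuousLinearMap hχ (hsmul hfst)
  have hχsnd := hB.comp_continuousLinearMap hχ (hsmul hsnd)
  have hχfst' := hχ.comp (ε • ContinuousLinearMap.fst ℝ V V).contDiff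
  have hχsnd' := hχ.comp (ε • ContinuousLinearMap.snd ℝ V V).contDiff
  have hχχ := DerivBoundOn.mul hχfst hχsnd hχfst' hχsnd' (Set.subset_univ _)
  exact DerivBoundOn.mul hθL hχχ (hθm.comp (contDiff_const.inner ℝ contDiff_fst))
    (hχfst'.mul hχsnd') (Set.subset_univ _)

variable {t α β : ℝ} {v : V → ℂ} {x : V} {ε : ℕ → ℝ}

theorem eventually_slabCutoff_eq (hθ : ∀ s, ‖s‖ ≤ 1 → θ s = 1) (hχ : ∀ x, ‖x‖ ≤ 1 → χ x = 1)
    (hε : Filter.Tendsto ε Filter.atTop (nhds 0)) (ht : t ∈ Set.Icc (0 : ℝ) 1)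
    (hx : ⟪e, x⟫_ℝ ∈ Metric.closedBall α 1) (hvc : HasCompactSupport v)
    (hv : ∀ y ∈ Function.support v, ⟪e, y⟫_ℝ ∈ Metric.closedBall β 1) :
    ∀ᶠ k in Filter.atTop, ∀ y ∈ Function.support v, ∀ ξ : V,
      slabCutoff θ χ e (t * α + (1 - t) * β) (ε k) (t • x + (1 - t) • y, ξ) = χ (ε k • ξ) := by
  have himage : IsCompact ((fun y => t • x + (1 - t) • y) '' tsupport v) :=
    hvc.isCompact.image (by fun_prop)
  obtain ⟨R, hR⟩ := himage.isBounded.exists_norm_le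
  have hsmall : ∀ᶠ k in Filter.atTop, ‖ε k‖ * R < 1 := by
    refine (hε.norm.mul_const R).eventually_lt_const ?_
    rw [norm_zero, zero_mul]
    exact one_pos
  filter_upwards [hsmall] with k hk y hy ξ
  have hmid : ‖ε k • (t • x + (1 - t) • y)‖ ≤ 1 := by
    rw [norm_smul]
    refine le_trans ?_ hk.le
    gcongr
    exact hR _ ⟨y, subset_tsupport v hy, rfl⟩
  have hslab : ‖⟪e, t • x + (1 - t) • y⟫_ℝ - (t * α + (1 - t) * β)‖ ≤ 1 := by
    rw [inner_add_right, inner_smul_right, inner_smul_right, ← mem_closedBall_iff_norm]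
    exact convexComb_mem_closedBall ht hx (hv y hy)
  rw [slabCutoff, hθ _ hslab, hχ _ hmid, one_mul, one_mul]

theorem nnnorm_sub_le_nnnorm_sub_add_two {y : V} (he : ‖e‖ ≤ 1)
    (hx : ⟪e, x⟫_ℝ ∈ Metric.closedBall α 1) (hy : ⟪e, y⟫_ℝ ∈ Metric.closedBall β 1) :
    ‖α - β‖₊ ≤ ‖x - y‖₊ + 2 := by
  rw [← NNReal.coe_le_coe]
  push_cast
  have hxy : ‖⟪e, x⟫_ℝ - ⟪e, y⟫_ℝ‖ ≤ ‖x - y‖ := by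
    rw [← inner_sub_right]
    exact (norm_inner_le_norm _ _).trans (mul_le_of_le_one_left (norm_nonneg _) he)
  rw [Metric.mem_closedBall, Real.dist_eq, abs_le] at hx hy
  rw [Real.norm_eq_abs] at hxy ⊢
  obtain ⟨h₁, h₂⟩ := abs_le.1 hxy
  exact abs_le.2 ⟨by linarith [hx.1, hy.2], by linarith [hx.2, hy.1]⟩

end Truncation

section Limit

variable {V : Type*} [NormedAddCommGroup V] [InnerProductSpace ℝ V]
  [MeasurableSpace V] [BorelSpace V]

theorem tendsto_integral_comp_smul_mul {χ I : V → ℂ} {μ : Measure V} (hχc : Continuous χ)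
    (hχ : ∀ x, ‖χ x‖ ≤ 1) (hχ0 : χ 0 = 1) (hI : Integrable I μ) {ε : ℕ → ℝ}
    (hε : Filter.Tendsto ε Filter.atTop (nhds 0)) :
    Filter.Tendsto (fun k => ∫ ξ, χ (ε k • ξ) * I ξ ∂μ) Filter.atTop (nhds (∫ ξ, I ξ ∂μ)) := by
  refine tendsto_integral_of_dominated_convergence (fun ξ => ‖I ξ‖) (fun k => ?_) hI.norm
    (fun k => ae_of_all _ fun ξ => ?_) (ae_of_all _ fun ξ => ?_)
  · exact (hχc.comp (continuous_const_smul (ε k))).aestronglyMeasurable.mul hI.1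
  · exact (norm_mul_le _ _).trans (mul_le_of_le_one_left (norm_nonneg _) (hχ _))
  · have hlim := ((hχc.tendsto _).comp (hε.smul_const ξ)).mul_const (I ξ)
    rwa [zero_smul, hχ0, one_mul] at hlim

variable [FiniteDimensional ℝ V] {θ : ℝ → ℂ} {χ : V → ℂ} {e : V} {t α β : ℝ} {b : V × V → ℂ}
  {v : V → ℂ} {x : V} {ε : ℕ → ℝ}

theorem tendsto_quantOp_slabCutoff_mul (hθ : ∀ s, ‖s‖ ≤ 1 → θ s = 1) (hχc : Continuous χ)
    (hχ : ∀ x, ‖χ x‖ ≤ 1) (hχ1 : ∀ x, ‖x‖ ≤ 1 → χ x = 1)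
    (hε : Filter.Tendsto ε Filter.atTop (nhds 0)) (ht : t ∈ Set.Icc (0 : ℝ) 1)
    (hx : ⟪e, x⟫_ℝ ∈ Metric.closedBall α 1) (hvc : HasCompactSupport v)
    (hv : ∀ y ∈ Function.support v, ⟪e, y⟫_ℝ ∈ Metric.closedBall β 1)
    (hne : quantOp t b v x ≠ 0) :
    Filter.Tendsto
      (fun k => quantOp t (fun z => slabCutoff θ χ e (t * α + (1 - t) * β) (ε k) z * b z) v x)
      Filter.atTop (nhds (quantOp t b v x)) := by
  have hint := not_imp_comm.1 integral_undef hne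
  have hχ0 : χ 0 = 1 := hχ1 0 (by rw [norm_zero]; exact zero_le_one)
  refine (tendsto_integral_comp_smul_mul hχc hχ hχ0 hint hε).congr' ?_
  filter_upwards [eventually_slabCutoff_eq hθ hχ1 hε ht hx hvc hv] with k hk
  refine integral_congr_ae (ae_of_all _ fun ξ => ?_)
  change _ * ∫ y, _ = _
  rw [← integral_const_mul]
  refine integral_congr_ae (ae_of_all _ fun y => ?_)
  by_cases hy : v y = 0
  · simp only [hy, mul_zero]
  · simp only [hk y hy ξ, mul_assoc]

theorem inv_one_add_tsub_two_pow_le (r : ℝ≥0) (M : ℕ) :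
    ((1 + (r - 2)) ^ M)⁻¹ ≤ 3 ^ M * ((1 + r) ^ M)⁻¹ := by
  rw [← div_eq_mul_inv, le_div_iff₀ (by positivity), ← div_eq_inv_mul,
    div_le_iff₀ (by positivity), ← mul_pow]
  have hr : r ≤ r - 2 + 2 := le_tsub_add
  gcongr
  calc 1 + r ≤ 1 + (r - 2 + 2) := by gcongr
    _ = 3 + (r - 2) := by ring
    _ ≤ 3 * (1 + (r - 2)) := by
      rw [mul_add, mul_one]
      gcongr
      exact le_mul_of_one_le_left zero_le (by norm_num)

theorem exists_eLpNorm_mul_quantOp_le (V : Type*) [NormedAddCommGroup V]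
    [InnerProductSpace ℝ V] [FiniteDimensional ℝ V] [MeasurableSpace V] [BorelSpace V] (M : ℕ) :
    ∃ C : ℝ≥0, ∀ t ∈ Set.Icc (0 : ℝ) 1, ∀ (b : V × V → ℂ) (S B : ℝ≥0) (e : V) (α β : ℝ),
      ContDiff ℝ ∞ b → ‖e‖ ≤ 1 →
      DerivBoundOn (2 * (Module.finrank ℝ V + 1) + M) S b (slab e (t * α + (1 - t) * β)) →
      ∀ v ζ : V → ℂ, IsTestFunction v → ContDiff ℝ ∞ ζ → (∀ x, ‖ζ x‖ ≤ B) →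
      (∀ y ∈ Function.support v, ⟪e, y⟫_ℝ ∈ Metric.closedBall β 1) →
      (∀ x ∈ Function.support ζ, ⟪e, x⟫_ℝ ∈ Metric.closedBall α 1) →
      eLpNorm (fun x => ζ x * quantOp t b v x) 2
        ≤ B * (C * S * ((1 + ‖α - β‖₊) ^ M)⁻¹ : ℝ≥0) * eLpNorm v 2 := by
  obtain ⟨C, hC⟩ := exists_eLpNorm_mul_quantOp_le_of_isTestFunction V M
  let P := 2 * (Module.finrank ℝ V + 1) + M
  obtain ⟨θ, hθ, hθsupp, -, hθ1⟩ := exists_isTestFunction_eq_one_on_closedBall ℝ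
  obtain ⟨χ, hχ, -, hχle, hχ1⟩ := exists_isTestFunction_eq_one_on_closedBall V
  obtain ⟨A, hA⟩ := exists_derivBoundOn_of_hasCompactSupport hθ.hasCompactSupport hθ.contDiff P
  obtain ⟨D, hD⟩ := exists_derivBoundOn_of_hasCompactSupport hχ.hasCompactSupport hχ.contDiff P
  let K : ℝ≥0 := 2 ^ P * (2 ^ P * A * (2 ^ P * D * D))
  refine ⟨C * K * 3 ^ M, fun t ht b S B e α β hb he hS v ζ hv hζ hζB hvs hζs => ?_⟩
  let ε (k : ℕ) : ℝ := 1 / (k + 1)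
  have hε1 (k : ℕ) : |ε k| ≤ 1 := by
    rw [abs_of_nonneg (by positivity)]
    exact div_le_one_of_le₀ (by linarith [k.cast_nonneg (α := ℝ)]) (by positivity)
  let b' (k : ℕ) (z : V × V) : ℂ := slabCutoff θ χ e (t * α + (1 - t) * β) (ε k) z * b z
  have hb' (k : ℕ) : IsTestFunction (b' k) :=
    IsTestFunction.mul_right (isTestFunction_slabCutoff hθ.contDiff hχ (by positivity)) hb
  have hB' (k : ℕ) : DerivBoundOn P (K * S) (b' k) Set.univ :=
    (derivBoundOn_slabCutoff hθ.contDiff hχ.contDiff hA hD he (hε1 k)).mul hS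
      (contDiff_slabCutoff hθ.contDiff hχ.contDiff) hb (tsupport_slabCutoff_subset hθsupp)
  have hdist : ∀ y ∈ Function.support v, ∀ x ∈ Function.support ζ, ‖α - β‖₊ - 2 ≤ ‖x - y‖₊ :=
    fun y hy x hx => tsub_le_iff_right.2 (nnnorm_sub_le_nnnorm_sub_add_two he (hζs x hx) (hvs y hy))
  refine eLpNorm_two_le_of_forall_tendsto (F := fun k x => ζ x * quantOp t (b' k) v x)
    (fun k => (hζ.continuous.mul (contDiff_quantOp (hb' k) hv).continuous).measurable)
    (fun x hx => ?_) fun k => ?_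
  · exact (tendsto_quantOp_slabCutoff_mul hθ1 hχ.continuous hχle hχ1
      tendsto_one_div_add_atTop_nhds_zero_nat ht (hζs x (left_ne_zero_of_mul hx))
      hv.hasCompactSupport hvs (right_ne_zero_of_mul hx)).const_mul (ζ x)
  · refine (hC t ht (b' k) (K * S) B _ (hb' k) (hB' k) v ζ hv hζ hζB hdist).trans ?_
    gcongr _ * ?_ * _
    refine ENNReal.coe_le_coe.2 ?_
    calc C * (K * S) * ((1 + (‖α - β‖₊ - 2)) ^ M)⁻¹
        ≤ C * (K * S) * (3 ^ M * ((1 + ‖α - β‖₊) ^ M)⁻¹) := by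
          gcongr
          exact inv_one_add_tsub_two_pow_le _ M
      _ = _ := by ring

end Limit

section WordDeriv

variable {E F ι : Type*} [NormedAddCommGroup E] [NormedSpace ℝ E]
  [NormedAddCommGroup F] [NormedSpace ℝ F] {g : E → ℂ}

theorem contDiff_dirD (hg : ContDiff ℝ ∞ g) (v : E) : ContDiff ℝ ∞ (dirD v g) :=
  (hg.fderiv_right (by simp)).clm_apply contDiff_const

theorem dirD_comm (hg : ContDiff ℝ ∞ g) (v w : E) : dirD v (dirD w g) = dirD w (dirD v g) := by
  ext x
  have hg2 : ContDiffAt ℝ 2 g x := (contDiff_infty.1 hg 2).contDiffAt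
  have hd : DifferentiableAt ℝ (fderiv ℝ g) x :=
    (hg2.fderiv_right (m := 1) (by norm_num)).differentiableAt (by norm_num)
  have dirD_dirD (v w : E) : dirD v (dirD w g) x = fderiv ℝ (fderiv ℝ g) x v w := by
    change fderiv ℝ (fun y => fderiv ℝ g y w) x v = _
    rw [fderiv_clm_apply hd (differentiableAt_const w)]
    simp only [fderiv_fun_const, Pi.zero_apply, ContinuousLinearMap.comp_zero, zero_add,
      ContinuousLinearMap.flip_apply]
  rw [dirD_dirD, dirD_dirD]
  exact (hg2.isSymmSndFDerivAt (by simp)).eq v w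

/-- The iterated directional derivative along the directions `e j`, for `j` running through the
letters of the word `w`; the first letter is the outermost derivative. -/
def wordDeriv (e : ι → E) (w : List ι) (g : E → ℂ) : E → ℂ :=
  w.foldr (fun j => dirD (e j)) g

variable {e : ι → E} {w w' : List ι}

theorem contDiff_wordDeriv (hg : ContDiff ℝ ∞ g) : ContDiff ℝ ∞ (wordDeriv e w g) := by
  induction w with
  | nil => exact hg
  | cons j w ih => exact contDiff_dirD ih (e j)

theorem wordDeriv_append : wordDeriv e (w ++ w') g = wordDeriv e w (wordDeriv e w' g) :=
  List.foldr_append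

theorem wordDeriv_replicate (n : ℕ) (j : ι) :
    wordDeriv e (List.replicate n j) = (dirD (e j))^[n] := by
  induction n with
  | zero => rfl
  | succ n ih => rw [Function.iterate_succ', ← ih]; rfl

theorem wordDeriv_flatMap {κ : Type*} (l : List κ) (s : κ → List ι) :
    wordDeriv e (l.flatMap s) g = l.foldr (fun i => wordDeriv e (s i)) g := by
  induction l with
  | nil => rfl
  | cons i l ih => rw [List.flatMap_cons, wordDeriv_append, ih, List.foldr_cons]

theorem wordDeriv_map {κ : Type*} (s : ι → κ) (e : κ → E) (w : List ι) :
    wordDeriv e (w.map s) g = wordDeriv (e ∘ s) w g :=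
  List.foldr_map

theorem wordDeriv_perm (hg : ContDiff ℝ ∞ g) (h : w.Perm w') :
    wordDeriv e w g = wordDeriv e w' g := by
  induction h with
  | nil => rfl
  | cons j _ ih => exact congrArg (dirD (e j)) ih
  | swap i j _ => exact dirD_comm (contDiff_wordDeriv hg) (e j) (e i)
  | trans _ _ ih₁ ih₂ => exact ih₁.trans ih₂

theorem wordDeriv_ofFn (hg : ContDiff ℝ ∞ g) {n : ℕ} (w : Fin n → ι) (z : E) :
    wordDeriv e (List.ofFn w) g z = iteratedFDeriv ℝ n g z (e ∘ w) := by
  induction n generalizing z with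
  | zero => rw [List.ofFn_zero, iteratedFDeriv_zero_apply]; rfl
  | succ n ih =>
    have hd : DifferentiableAt ℝ (iteratedFDeriv ℝ n g) z :=
      (hg.differentiable_iteratedFDeriv (by exact_mod_cast WithTop.coe_lt_top n)) z
    rw [List.ofFn_succ, iteratedFDeriv_succ_apply_left,
      ← fderiv_continuousMultilinear_apply_const_apply hd]
    exact congrArg (fun G => fderiv ℝ G z (e (w 0))) (funext fun x => ih (w ∘ Fin.succ) x)

theorem wordDeriv_comp_continuousLinearMap (hg : ContDiff ℝ ∞ g) {L : F →L[ℝ] E} {e' : ι → F}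
    {c : ι → ℝ} (hL : ∀ j, L (e' j) = c j • e j) (w : List ι) :
    wordDeriv e' w (g ∘ L) = (w.map c).prod • wordDeriv e w g ∘ L := by
  induction w with
  | nil => simp only [List.map_nil, List.prod_nil, one_smul]; rfl
  | cons j w ih =>
    have hd : Differentiable ℝ (wordDeriv e w g) :=
      (contDiff_wordDeriv hg).differentiable (by simp)
    funext z
    change fderiv ℝ (wordDeriv e' w (g ∘ L)) z (e' j) = _
    have hderiv := ((hd (L z)).hasFDerivAt.comp z L.hasFDerivAt).const_smul (w.map c).prod
    rw [ih, hderiv.fderiv, List.map_cons, List.prod_cons, mul_comm, mul_smul]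
    simp only [smul_apply, ContinuousLinearMap.comp_apply, hL, map_smul]
    rfl

theorem norm_iteratedFDeriv_le_of_forall_wordDeriv [Fintype ι] (hg : ContDiff ℝ ∞ g)
    {φ : ι → E →L[ℝ] ℝ} (hφ : ∀ j, ‖φ j‖ ≤ 1) (hφe : ∀ v, ∑ j, φ j v • e j = v) {n : ℕ} {z : E}
    {S : ℝ≥0} (hS : ∀ w : List ι, w.length = n → ‖wordDeriv e w g z‖ ≤ S) :
    ‖iteratedFDeriv ℝ n g z‖ ≤ Fintype.card ι ^ n * S := by
  classical
  refine ContinuousMultilinearMap.opNorm_le_bound (by positivity) fun m => ?_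
  have hexpand : iteratedFDeriv ℝ n g z m =
      ∑ w : Fin n → ι, (∏ k, φ (w k) (m k)) • wordDeriv e (List.ofFn w) g z := by
    conv_lhs => rw [← funext fun k => hφe (m k), ContinuousMultilinearMap.map_sum]
    refine sum_congr rfl fun w _ => ?_
    rw [wordDeriv_ofFn hg, ContinuousMultilinearMap.map_smul_univ]
    rfl
  rw [hexpand]
  refine (norm_sum_le_of_le univ (n := fun _ => S * ∏ k, ‖m k‖) fun w _ => ?_).trans_eq ?_
  · rw [norm_smul, mul_comm, norm_prod]
    gcongr with k
    · exact hS (List.ofFn w) List.length_ofFn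
    · simpa only [one_mul] using (φ (w k)).le_of_opNorm_le (hφ _) (m k)
  · simp only [sum_const, card_univ, Fintype.card_pi_const, nsmul_eq_mul, Nat.cast_pow, mul_assoc]

end WordDeriv

section MultiIndex

variable {d : ℕ}

theorem degA_le_deg (α : MIdx d) : degA α ≤ deg α :=
  Nat.le_add_left _ _

/-- The coordinate directions of `Q d`, with `∂_r` as number `0`. -/
def coordDir (d : ℕ) : Fin (d + 1) → Q d := Fin.cons (eR d) (eTh d)

/-- The coordinate directions of phase space: positions on the left, momenta on the right. -/
def phaseDir (d : ℕ) : Fin (d + 1) ⊕ Fin (d + 1) → Q d × Q d :=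
  Sum.elim (fun i => (coordDir d i, 0)) (fun i => (0, coordDir d i))

/-- The nondecreasing word in which each letter occurs as often as the multiindex prescribes. -/
def indexWord (α : MIdx d) : List (Fin (d + 1)) :=
  List.replicate α.1 0 ++ (List.finRange d).flatMap fun i => List.replicate (α.2 i) i.succ

/-- The word of the phase-space derivative `∂_q^α ∂_p^β`. -/
def phaseWord (α β : MIdx d) : List (Fin (d + 1) ⊕ Fin (d + 1)) :=
  (indexWord α).map Sum.inl ++ (indexWord β).map Sum.inr

theorem mderiv2_eq_wordDeriv (α β : MIdx d) (g : Q d × Q d → ℂ) :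
    mderiv2 α β g = wordDeriv (phaseDir d) (phaseWord α β) g := by
  simp only [phaseWord, indexWord, wordDeriv_append, wordDeriv_map, wordDeriv_flatMap,
    wordDeriv_replicate]
  rfl

theorem prod_map_indexWord {M : Type*} [CommMonoid M] (α : MIdx d) (c : Fin (d + 1) → M) :
    ((indexWord α).map c).prod = c 0 ^ α.1 * ∏ i, c (Fin.succ i) ^ α.2 i := by
  simp [indexWord, List.flatMap, List.prod_flatten, Function.comp_def,
    Fin.prod_univ_def]

theorem length_indexWord (α : MIdx d) : (indexWord α).length = deg α := by
  simp [indexWord, deg, List.length_flatMap, Fin.sum_univ_def]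

theorem count_indexWord (α : MIdx d) (j : Fin (d + 1)) :
    (indexWord α).count j = Fin.cons (α := fun _ => ℕ) α.1 α.2 j := by
  refine Fin.cases ?_ (fun i => ?_) j
  · simp [indexWord, List.count_flatMap, List.count_replicate, Function.comp_def]
  · simp [indexWord, List.count_flatMap, List.count_replicate, Function.comp_def,
      ← Fin.sum_univ_def, (Fin.succ_ne_zero i).symm]

theorem length_phaseWord (α β : MIdx d) : (phaseWord α β).length = deg α + deg β := by
  simp only [phaseWord, List.length_append, List.length_map, length_indexWord]

theorem exists_perm_phaseWord (w : List (Fin (d + 1) ⊕ Fin (d + 1))) :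
    ∃ α β : MIdx d, w.Perm (phaseWord α β) := by
  let _ : BEq (Fin (d + 1) ⊕ Fin (d + 1)) := instBEqOfDecidableEq
  refine ⟨(w.count (.inl 0), fun i => w.count (.inl i.succ)),
    (w.count (.inr 0), fun i => w.count (.inr i.succ)), List.perm_iff_count.2 ?_⟩
  have count_inl (u : List (Fin (d + 1))) (j : Fin (d + 1)) :
      (u.map Sum.inr).count (Sum.inl j : Fin (d + 1) ⊕ Fin (d + 1)) = 0 :=
    List.count_eq_zero.2 (by simp only [List.mem_map, reduceCtorEq, and_false, exists_false,
      not_false_eq_true])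
  have count_inr (u : List (Fin (d + 1))) (j : Fin (d + 1)) :
      (u.map Sum.inl).count (Sum.inr j : Fin (d + 1) ⊕ Fin (d + 1)) = 0 :=
    List.count_eq_zero.2 (by simp only [List.mem_map, reduceCtorEq, and_false, exists_false,
      not_false_eq_true])
  rintro (j | j) <;>
  · simp only [phaseWord, List.count_append, List.count_map_of_injective _ _ Sum.inl_injective,
      List.count_map_of_injective _ _ Sum.inr_injective, count_inl, count_inr,
      count_indexWord, add_zero,
      zero_add]
    exact Fin.cases rfl (fun _ => rfl) j

end MultiIndex

section Symbol

variable {d : ℕ} {f : ℝ → ℝ} {m : ℝ} {a : Q d × Q d → ℂ}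

theorem one_le_brF (f : ℝ → ℝ) (x : Q d × Q d) : 1 ≤ brF f x := by
  rw [brF, Real.one_le_sqrt, add_assoc]
  exact le_add_of_nonneg_right (by positivity)

theorem mem_idxSet {N : ℕ} {α : MIdx d} : α ∈ idxSet d N ↔ deg α ≤ N := by
  rw [idxSet, mem_filter, and_iff_right_iff_imp, mem_product, Fintype.mem_piFinset]
  intro h
  have hα (i : Fin d) : α.2 i ≤ deg α :=
    (single_le_sum (fun _ _ => Nat.zero_le _) (mem_univ i)).trans (degA_le_deg α)
  exact ⟨mem_range_succ_iff.2 ((Nat.le_add_right _ _).trans h),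
    fun i => mem_range_succ_iff.2 ((hα i).trans h)⟩

/-- The weight with which `∂_q^α ∂_p^β a` enters the seminorms of `S^m_f`. -/
def symWeight (f : ℝ → ℝ) (m : ℝ) (α β : MIdx d) (x : Q d × Q d) : ℝ :=
  f x.1.1 ^ (-(degA α : ℝ) + (degA β : ℝ)) * brF f x ^ (-m + (deg β : ℝ))

theorem symWeight_pos (hf : ∀ r, 0 < f r) (α β : MIdx d) (x : Q d × Q d) :
    0 < symWeight f m α β x :=
  mul_pos (Real.rpow_pos_of_pos (hf _) _)
    (Real.rpow_pos_of_pos (one_pos.trans_le (one_le_brF f x)) _)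

theorem symWeight_mul_cancel (hf : ∀ r, 0 < f r) (α β : MIdx d) (x : Q d × Q d) (C : ℝ) :
    symWeight f m α β x * (C * f x.1.1 ^ ((degA α : ℝ) - degA β) * brF f x ^ (m - deg β)) = C := by
  have hbr := one_pos.trans_le (one_le_brF f x)
  calc _ = C * (f x.1.1 ^ (-(degA α : ℝ) + degA β) * f x.1.1 ^ ((degA α : ℝ) - degA β)) *
        (brF f x ^ (-m + deg β) * brF f x ^ (m - deg β)) := by rw [symWeight]; ring
    _ = C := by
      rw [← Real.rpow_add (hf _), ← Real.rpow_add hbr]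
      ring_nf
      simp only [Real.rpow_zero, mul_one]

theorem symNorm_summand_nonneg (hf : ∀ r, 0 < f r) (m : ℝ) (N : ℕ) (a : Q d × Q d → ℂ)
    (α β : MIdx d) :
    0 ≤ if deg α + deg β ≤ N then ⨆ x, symWeight f m α β x * ‖mderiv2 α β a x‖ else 0 := by
  split_ifs
  · exact Real.iSup_nonneg fun x => mul_nonneg (symWeight_pos hf α β x).le (norm_nonneg _)
  · exact le_rfl

theorem symNorm_nonneg (hf : ∀ r, 0 < f r) (m : ℝ) (N : ℕ) (a : Q d × Q d → ℂ) :
    0 ≤ symNorm f m N a :=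
  sum_nonneg fun α _ => sum_nonneg fun β _ => symNorm_summand_nonneg hf m N a α β

theorem IsSymbol.symWeight_mul_le_symNorm (ha : IsSymbol f m a) (hf : ∀ r, 0 < f r) {N : ℕ}
    {α β : MIdx d} (h : deg α + deg β ≤ N) (x : Q d × Q d) :
    symWeight f m α β x * ‖mderiv2 α β a x‖ ≤ symNorm f m N a := by
  have hbdd : BddAbove (Set.range fun x => symWeight f m α β x * ‖mderiv2 α β a x‖) := by
    obtain ⟨C, hC⟩ := ha.2 α β
    refine ⟨C, ?_⟩
    rintro _ ⟨x, rfl⟩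
    exact (mul_le_mul_of_nonneg_left (hC x) (symWeight_pos hf α β x).le).trans_eq
      (symWeight_mul_cancel hf α β x C)
  have hterm := symNorm_summand_nonneg hf m N a
  calc symWeight f m α β x * ‖mderiv2 α β a x‖
      ≤ ⨆ x, symWeight f m α β x * ‖mderiv2 α β a x‖ := le_ciSup hbdd x
    _ = if deg α + deg β ≤ N then ⨆ x, symWeight f m α β x * ‖mderiv2 α β a x‖ else 0 :=
        (if_pos h).symm
    _ ≤ ∑ β ∈ idxSet d N,
          if deg α + deg β ≤ N then ⨆ x, symWeight f m α β x * ‖mderiv2 α β a x‖ else 0 :=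
        single_le_sum (fun β _ => hterm α β) (mem_idxSet.2 (le_of_add_le_right h))
    _ ≤ symNorm f m N a :=
        single_le_sum (f := fun α => ∑ β ∈ idxSet d N,
          if deg α + deg β ≤ N then ⨆ x, symWeight f m α β x * ‖mderiv2 α β a x‖ else 0)
          (fun α _ => sum_nonneg fun β _ => hterm α β) (mem_idxSet.2 (le_of_add_le_left h))

theorem IsSymbol.rpow_mul_le_symNorm (ha : IsSymbol f m a) (hf : ∀ r, 0 < f r) (hm : m ≤ 0)
    {N : ℕ} {α β : MIdx d} (h : deg α + deg β ≤ N) (x : Q d × Q d) :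
    f x.1.1 ^ (-(degA α : ℝ) + (degA β : ℝ)) * ‖mderiv2 α β a x‖ ≤ symNorm f m N a := by
  refine le_trans ?_ (ha.symWeight_mul_le_symNorm hf h x)
  have hfx := Real.rpow_nonneg (hf x.1.1).le (-(degA α : ℝ) + (degA β : ℝ))
  gcongr
  exact le_mul_of_one_le_right hfx
    (Real.one_le_rpow (one_le_brF f x) (by linarith [(deg β).cast_nonneg (α := ℝ)]))

theorem rpow_le_exp_mul_rpow (hf : ∀ r, 0 < f r) {L : ℝ≥0}
    (hL : LipschitzWith L fun r => Real.log (f r)) (r s x : ℝ) :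
    f s ^ x ≤ Real.exp (L * dist s r * |x|) * f r ^ x := by
  rw [Real.rpow_def_of_pos (hf s), Real.rpow_def_of_pos (hf r), ← Real.exp_add, Real.exp_le_exp,
    ← sub_le_iff_le_add, ← sub_mul]
  calc (Real.log (f s) - Real.log (f r)) * x
      ≤ |Real.log (f s) - Real.log (f r)| * |x| := (le_abs_self _).trans_eq (abs_mul _ _)
    _ ≤ L * dist s r * |x| := by
        gcongr
        exact hL.dist_le_mul s r

end Symbol

section AngularScale

variable {d : ℕ}

/-- The identification of Euclidean space with `ℝ × ℝ^d`, with the angular variables multiplied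
by `μ`. -/
def angularScale (d : ℕ) (μ : ℝ) : EuclideanSpace ℝ (Fin (d + 1)) →L[ℝ] Q d :=
  (EuclideanSpace.proj 0).prod (ContinuousLinearMap.pi fun i => μ • EuclideanSpace.proj i.succ)

theorem angularScale_apply (μ : ℝ) (x : EuclideanSpace ℝ (Fin (d + 1))) :
    angularScale d μ x = (x 0, fun i => μ * x i.succ) := rfl

theorem angularScale_injective {μ : ℝ} (hμ : μ ≠ 0) : Function.Injective (angularScale d μ) := by
  intro x y h
  obtain ⟨h0, hsucc⟩ := Prod.mk.inj h
  ext i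
  exact Fin.cases h0 (fun i => mul_left_cancel₀ hμ (congrFun hsucc i)) i

theorem isClosedEmbedding_angularScale {μ : ℝ} (hμ : μ ≠ 0) :
    Topology.IsClosedEmbedding (angularScale d μ) :=
  LinearMap.isClosedEmbedding_of_injective (f := (angularScale d μ).toLinearMap)
    (LinearMap.ker_eq_bot.2 (angularScale_injective hμ))

theorem map_angularScale_volume {μ : ℝ} (hμ : 0 < μ) :
    Measure.map (angularScale d μ) volume = ENNReal.ofReal (μ ^ d)⁻¹ • volume := by
  have hsplit := (volume_preserving_piFinSuccAbove (fun _ : Fin (d + 1) => ℝ) 0).comp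
    (PiLp.volume_preserving_ofLp (Fin (d + 1)))
  have hscale : (angularScale d μ : _ → Q d) = Prod.map id (fun x : Fin d → ℝ => μ • x) ∘
      MeasurableEquiv.piFinSuccAbove (fun _ => ℝ) 0 ∘ WithLp.ofLp := rfl
  rw [hscale, ← Measure.map_map (by fun_prop) hsplit.measurable, hsplit.map_eq,
    Measure.volume_eq_prod, ← Measure.map_prod_map _ _ measurable_id (by fun_prop),
    Measure.map_id, Measure.map_addHaar_smul _ hμ.ne', Measure.prod_smul_right,
    Module.finrank_fin_fun, abs_of_pos (by positivity)]

theorem integral_comp_angularScale {G : Type*} [NormedAddCommGroup G] [NormedSpace ℝ G] {μ : ℝ}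
    (hμ : 0 < μ) (F : Q d → G) :
    ∫ x, F (angularScale d μ x) = (μ ^ d)⁻¹ • ∫ q, F q := by
  rw [← (isClosedEmbedding_angularScale hμ.ne').measurableEmbedding.integral_map,
    map_angularScale_volume hμ, integral_smul_measure, ENNReal.toReal_ofReal (by positivity)]

theorem eLpNorm_two_comp_angularScale {G : Type*} [NormedAddCommGroup G] {μ : ℝ} (hμ : 0 < μ)
    (g : Q d → G) : eLpNorm (g ∘ angularScale d μ) 2 volume =
      ENNReal.ofReal (μ ^ d)⁻¹ ^ (1 / 2 : ℝ) * eLpNorm g 2 volume := by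
  rw [← (isClosedEmbedding_angularScale hμ.ne').measurableEmbedding.eLpNorm_map_measure,
    map_angularScale_volume hμ, eLpNorm_smul_measure_of_ne_top (by norm_num), smul_eq_mul]
  norm_num

theorem qdot_angularScale {μ : ℝ} (hμ : μ ≠ 0) (ξ x : EuclideanSpace ℝ (Fin (d + 1))) :
    qdot (angularScale d μ ξ) (angularScale d μ⁻¹ x) = ⟪ξ, x⟫_ℝ := by
  rw [PiLp.inner_apply, Fin.sum_univ_succ]
  simp only [qdot, angularScale_apply, RCLike.inner_apply, conj_trivial]
  congr 1
  · exact mul_comm _ _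
  · exact sum_congr rfl fun i _ => by field_simp

theorem ephase_smul_angularScale {μ ℏ : ℝ} (hμ : μ ≠ 0) (hℏ : ℏ ≠ 0)
    (ξ x : EuclideanSpace ℝ (Fin (d + 1))) :
    ephase ℏ ((2 * Real.pi * ℏ) • angularScale d μ ξ) (angularScale d μ⁻¹ x) = 𝐞 ⟪ξ, x⟫_ℝ := by
  have hsmul (c : ℝ) (p q : Q d) : qdot (c • p) q = c * qdot p q := by
    simp only [qdot, Prod.smul_fst, Prod.smul_snd, Pi.smul_apply, smul_eq_mul, mul_add, mul_sum,
      mul_assoc]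
  have hℏ' : (ℏ : ℂ) ≠ 0 := Complex.ofReal_ne_zero.2 hℏ
  rw [ephase, hsmul, qdot_angularScale hμ, Real.fourierChar_apply]
  congr 1
  push_cast
  field_simp

/-- The symplectic rescaling of the angular variables by `lam`, with momenta multiplied by `h`. -/
def phaseScale (d : ℕ) (lam h : ℝ) :
    EuclideanSpace ℝ (Fin (d + 1)) × EuclideanSpace ℝ (Fin (d + 1)) →L[ℝ] Q d × Q d :=
  (angularScale d lam⁻¹).prodMap (h • angularScale d lam)

theorem phaseScale_apply (lam h : ℝ)
    (z : EuclideanSpace ℝ (Fin (d + 1)) × EuclideanSpace ℝ (Fin (d + 1))) :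
    phaseScale d lam h z = (angularScale d lam⁻¹ z.1, h • angularScale d lam z.2) := rfl

theorem Op_angularScale {ℏ lam : ℝ} (hℏ : 0 < ℏ) (hlam : 0 < lam) (t : ℝ) (a : Q d × Q d → ℂ)
    (u : Q d → ℂ) (x : EuclideanSpace ℝ (Fin (d + 1))) :
    Op ℏ t a u (angularScale d lam⁻¹ x) =
      quantOp t (a ∘ phaseScale d lam (2 * Real.pi * ℏ)) (u ∘ angularScale d lam⁻¹) x := by
  let h := 2 * Real.pi * ℏ
  have : 0 < h := by positivity
  let J (p : Q d) : ℂ := ∫ q', a (t • angularScale d lam⁻¹ x + (1 - t) • q', p) *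
    ephase ℏ p (angularScale d lam⁻¹ x - q') * u q'
  have inner_integral (ξ : EuclideanSpace ℝ (Fin (d + 1))) :
      ∫ y, (a ∘ phaseScale d lam h) (t • x + (1 - t) • y, ξ) * 𝐞 ⟪ξ, x - y⟫_ℝ *
        (u ∘ angularScale d lam⁻¹) y = lam ^ d • J (angularScale d lam (h • ξ)) := by
    have hint := integral_comp_angularScale (inv_pos.2 hlam) fun q' =>
      a (t • angularScale d lam⁻¹ x + (1 - t) • q', angularScale d lam (h • ξ)) *
        ephase ℏ (angularScale d lam (h • ξ)) (angularScale d lam⁻¹ x - q') * u q'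
    rw [inv_pow, inv_inv] at hint
    rw [← hint]
    have phase_eq (y : EuclideanSpace ℝ (Fin (d + 1))) :
        ephase ℏ (angularScale d lam (h • ξ)) (angularScale d lam⁻¹ x - angularScale d lam⁻¹ y) =
          𝐞 ⟪ξ, x - y⟫_ℝ := by
      rw [map_smul, ← map_sub]
      exact ephase_smul_angularScale hlam.ne' hℏ.ne' ξ (x - y)
    simp only [phase_eq]
    simp only [Function.comp_apply, phaseScale_apply, map_add, map_smul]
  calc Op ℏ t a u (angularScale d lam⁻¹ x) = (h ^ (d + 1))⁻¹ • ∫ p, J p := rfl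
    _ = lam ^ d • (h ^ (d + 1))⁻¹ • ∫ ξ, J (angularScale d lam ξ) := by
        rw [integral_comp_angularScale hlam, smul_comm (h ^ (d + 1))⁻¹,
          smul_inv_smul₀ (pow_pos hlam d).ne']
    _ = lam ^ d • ∫ ξ, J (angularScale d lam (h • ξ)) := by
        rw [Measure.integral_comp_smul volume (fun ξ => J (angularScale d lam ξ)),
          finrank_euclideanSpace_fin, abs_of_pos (by positivity)]
    _ = _ := by
        rw [← integral_smul]
        exact integral_congr_ae (ae_of_all _ fun ξ => (inner_integral ξ).symm)

end AngularScale

section OffDiagonalDecay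

variable {d : ℕ}

/-- The coordinate directions of the Euclidean model of phase space. -/
def euclideanPhaseDir (d : ℕ) : Fin (d + 1) ⊕ Fin (d + 1) →
    EuclideanSpace ℝ (Fin (d + 1)) × EuclideanSpace ℝ (Fin (d + 1)) :=
  Sum.elim (fun i => (EuclideanSpace.single i 1, 0)) (fun i => (0, EuclideanSpace.single i 1))

/-- The factors by which `phaseScale` stretches the coordinate directions. -/
def scaleFactor (d : ℕ) (lam h : ℝ) : Fin (d + 1) ⊕ Fin (d + 1) → ℝ :=
  Sum.elim (Fin.cons 1 fun _ => lam⁻¹) (Fin.cons h fun _ => h * lam)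

theorem phaseScale_euclideanPhaseDir (lam h : ℝ) (j : Fin (d + 1) ⊕ Fin (d + 1)) :
    phaseScale d lam h (euclideanPhaseDir d j) = scaleFactor d lam h j • phaseDir d j := by
  have angularScale_single (μ : ℝ) (i : Fin (d + 1)) :
      angularScale d μ (EuclideanSpace.single i 1) =
        Fin.cons (α := fun _ => ℝ) 1 (fun _ => μ) i • coordDir d i := by
    refine Fin.cases ?_ (fun i => ?_) i <;>
    · refine Prod.ext ?_ (funext fun k => ?_) <;>
      simp [angularScale_apply, coordDir, eR, eTh, Pi.single_apply, Fin.succ_ne_zero]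
  rcases j with j | j
  · simp only [euclideanPhaseDir, phaseScale_apply, Sum.elim_inl, angularScale_single,
      map_zero, smul_zero, scaleFactor, phaseDir, Prod.smul_mk]
  · simp only [euclideanPhaseDir, phaseScale_apply, Sum.elim_inr, angularScale_single,
      map_zero, scaleFactor, phaseDir, Prod.smul_mk, smul_zero, smul_smul]
    exact Fin.cases (by simp) (fun i => by simp) j

theorem prod_map_scaleFactor_phaseWord {lam : ℝ} (hlam : 0 < lam) (h : ℝ) (α β : MIdx d) :
    ((phaseWord α β).map (scaleFactor d lam h)).prod =
      lam ^ (-(degA α : ℝ) + degA β) * h ^ deg β := by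
  rw [Real.rpow_add hlam, Real.rpow_neg hlam.le, Real.rpow_natCast, Real.rpow_natCast]
  simp only [phaseWord, List.map_append, List.map_map, List.prod_append, prod_map_indexWord,
    Function.comp_apply, scaleFactor, Sum.elim_inl, Sum.elim_inr, Fin.cons_zero, Fin.cons_succ,
    prod_pow_eq_pow_sum]
  simp only [one_pow, one_mul, deg, degA, mul_pow, pow_add, inv_pow]
  ring

theorem abs_neg_degA_add_degA_le {α β : MIdx d} {n : ℕ} (h : deg α + deg β ≤ n) :
    |(-(degA α : ℝ) + degA β)| ≤ n := by
  have hα : (degA α : ℝ) + degA β ≤ n :=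
    mod_cast (add_le_add (degA_le_deg α) (degA_le_deg β)).trans h
  rw [abs_le]
  constructor <;> linarith [(degA α).cast_nonneg (α := ℝ), (degA β).cast_nonneg (α := ℝ)]

variable {f : ℝ → ℝ} {L : ℝ≥0} {m : ℝ}

theorem IsSymbol.norm_wordDeriv_comp_phaseScale_le {a : Q d × Q d → ℂ} (ha : IsSymbol f m a)
    (hf : ∀ r, 0 < f r) (hL : LipschitzWith L fun r => Real.log (f r)) (hm : m ≤ 0) {n : ℕ}
    {w : List (Fin (d + 1) ⊕ Fin (d + 1))} (hw : w.length ≤ n) {H : ℝ} (hH : 1 ≤ H)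
    {h : ℝ} (hh : h ∈ Set.Ioc 0 H) {s : ℝ}
    {z : EuclideanSpace ℝ (Fin (d + 1)) × EuclideanSpace ℝ (Fin (d + 1))}
    (hz : dist s (z.1 0) ≤ 2) :
    ‖wordDeriv (euclideanPhaseDir d) w (a ∘ phaseScale d (f s) h) z‖ ≤
      Real.exp (L * 2 * n) * H ^ n * symNorm f m n a := by
  obtain ⟨α, β, hperm⟩ := exists_perm_phaseWord w
  have hdeg : deg α + deg β ≤ n := by rwa [← length_phaseWord, ← hperm.length_eq]
  have hratio : f s ^ (-(degA α : ℝ) + degA β) ≤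
      Real.exp (L * 2 * n) * f (z.1 0) ^ (-(degA α : ℝ) + degA β) := by
    refine (rpow_le_exp_mul_rpow hf hL (z.1 0) s _).trans ?_
    have := Real.rpow_nonneg (hf (z.1 0)).le (-(degA α : ℝ) + degA β)
    gcongr
    exact abs_neg_degA_add_degA_le hdeg
  have hpow : h ^ deg β ≤ H ^ n :=
    (pow_le_pow_left₀ hh.1.le hh.2 _).trans (pow_le_pow_right₀ hH (le_of_add_le_right hdeg))
  have hsym := ha.rpow_mul_le_symNorm hf hm hdeg (phaseScale d (f s) h z)
  rw [wordDeriv_comp_continuousLinearMap ha.1 (phaseScale_euclideanPhaseDir (f s) h),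
    (hperm.map _).prod_eq, prod_map_scaleFactor_phaseWord (hf s), wordDeriv_perm ha.1 hperm,
    ← mderiv2_eq_wordDeriv, Pi.smul_apply, norm_smul, Function.comp_apply,
    Real.norm_of_nonneg (mul_nonneg (Real.rpow_nonneg (hf s).le _) (pow_nonneg hh.1.le _))]
  have hfz := Real.rpow_nonneg (hf (z.1 0)).le (-(degA α : ℝ) + degA β)
  have hh0 := hh.1.le
  calc _ ≤ Real.exp (L * 2 * n) * f (z.1 0) ^ (-(degA α : ℝ) + degA β) * H ^ n *
        ‖mderiv2 α β a (phaseScale d (f s) h z)‖ := by gcongr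
    _ = Real.exp (L * 2 * n) * H ^ n * (f (z.1 0) ^ (-(degA α : ℝ) + degA β) *
        ‖mderiv2 α β a (phaseScale d (f s) h z)‖) := by ring
    _ ≤ _ := by gcongr; exact hsym

theorem norm_iteratedFDeriv_le_of_forall_euclideanPhaseDir
    {b : EuclideanSpace ℝ (Fin (d + 1)) × EuclideanSpace ℝ (Fin (d + 1)) → ℂ}
    (hb : ContDiff ℝ ∞ b) {n : ℕ} {z} {S : ℝ≥0}
    (hS : ∀ w, w.length = n → ‖wordDeriv (euclideanPhaseDir d) w b z‖ ≤ S) :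
    ‖iteratedFDeriv ℝ n b z‖ ≤ Fintype.card (Fin (d + 1) ⊕ Fin (d + 1)) ^ n * S := by
  refine norm_iteratedFDeriv_le_of_forall_wordDeriv hb
    (φ := Sum.elim (fun i => (EuclideanSpace.proj i).comp (ContinuousLinearMap.fst ℝ _ _))
      (fun i => (EuclideanSpace.proj i).comp (ContinuousLinearMap.snd ℝ _ _))) ?_ ?_ hS
  · rintro (i | i)
    · exact ContinuousLinearMap.opNorm_le_bound _ zero_le_one fun v => by
        rw [one_mul]
        exact (PiLp.norm_apply_le v.1 i).trans (norm_fst_le v)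
    · exact ContinuousLinearMap.opNorm_le_bound _ zero_le_one fun v => by
        rw [one_mul]
        exact (PiLp.norm_apply_le v.2 i).trans (norm_snd_le v)
  · intro v
    simp only [Fintype.sum_sum_type, Sum.elim_inl, Sum.elim_inr, euclideanPhaseDir]
    refine Prod.ext ?_ ?_ <;> ext k <;>
      simp [Prod.fst_sum, Prod.snd_sum, Finset.sum_apply, Pi.single_apply]

theorem inner_single_zero (x : EuclideanSpace ℝ (Fin (d + 1))) :
    ⟪EuclideanSpace.single 0 1, x⟫_ℝ = x 0 := by
  rw [EuclideanSpace.inner_single_left, map_one, one_mul]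

theorem exists_derivBoundOn_comp_phaseScale (hf : ∀ r, 0 < f r)
    (hL : LipschitzWith L fun r => Real.log (f r)) (hm : m ≤ 0) (d n : ℕ) :
    ∃ K : ℝ≥0, ∀ a : Q d × Q d → ℂ, IsSymbol f m a → ∀ h ∈ Set.Ioc 0 (2 * Real.pi), ∀ s : ℝ,
      DerivBoundOn n (K * (symNorm f m n a).toNNReal) (a ∘ phaseScale d (f s) h)
        (slab (EuclideanSpace.single 0 1) s) := by
  have hpi : 1 ≤ 2 * Real.pi := by linarith [Real.pi_gt_three]
  let c : ℝ≥0 := Fintype.card (Fin (d + 1) ⊕ Fin (d + 1))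
  have hc : 1 ≤ c := Nat.one_le_cast.2 Fintype.card_pos
  let S : ℝ≥0 := ⟨Real.exp (L * 2 * n) * (2 * Real.pi) ^ n, by positivity⟩
  refine ⟨c ^ n * S, fun a ha h hh s i hi z hz => ?_⟩
  have hzs : dist s (z.1 0) ≤ 2 := by
    rw [dist_comm, ← inner_single_zero]
    exact hz
  refine (norm_iteratedFDeriv_le_of_forall_euclideanPhaseDir
    (S := S * (symNorm f m n a).toNNReal) (ha.1.comp (phaseScale d (f s) h).contDiff)
    fun w hw => ?_).trans ?_
  · rw [NNReal.coe_mul, Real.coe_toNNReal _ (symNorm_nonneg hf m n a)]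
    exact ha.norm_wordDeriv_comp_phaseScale_le hf hL hm (hw.trans_le hi) hpi hh hzs
  · refine NNReal.coe_le_coe.2 (?_ : c ^ i * (S * _) ≤ c ^ n * S * _)
    rw [mul_assoc]
    gcongr

theorem ofReal_l2norm_le (g : Q d → ℂ) : ENNReal.ofReal (l2norm g) ≤ eLpNorm g 2 := by
  have hint : ENNReal.ofReal (∫ q, ‖g q‖ ^ 2) ≤ eLpNorm g 2 ^ 2 := by
    rw [sq_eLpNorm_two, ← Real.enorm_of_nonneg (integral_nonneg fun q => by positivity)]
    refine (enorm_integral_le_lintegral_enorm _).trans_eq (lintegral_congr fun q => ?_)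
    rw [enorm_pow, enorm_norm]
  rw [l2norm, ← ENNReal.ofReal_rpow_of_nonneg (integral_nonneg fun q => by positivity)
    (by norm_num)]
  refine (ENNReal.rpow_le_rpow hint (by norm_num)).trans_eq ?_
  rw [← ENNReal.rpow_natCast, ← ENNReal.rpow_mul]
  norm_num

theorem IsCc.eLpNorm_two {u : Q d → ℂ} (hu : IsCc u) :
    eLpNorm u 2 = ENNReal.ofReal (l2norm u) := by
  have hmem : MemLp u 2 := hu.1.continuous.memLp_of_hasCompactSupport hu.2
  rw [hmem.eLpNorm_eq_integral_rpow_norm two_ne_zero ENNReal.ofNat_ne_top, l2norm]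
  norm_num

theorem inv_one_add_abs_pow_le (x : ℝ) (N : ℕ) :
    ((1 + |x|) ^ N)⁻¹ ≤ Real.sqrt (1 + x ^ 2) ^ (-(N : ℝ)) := by
  rw [Real.rpow_neg (Real.sqrt_nonneg _), Real.rpow_natCast]
  gcongr
  exact Real.sqrt_le_iff.2 ⟨by positivity, by nlinarith [sq_abs x, abs_nonneg x]⟩

theorem exists_eLpNorm_mul_Op_le (hf : ∀ r, 0 < f r)
    (hL : LipschitzWith L fun r => Real.log (f r)) (hm : m ≤ 0) (d N : ℕ) :
    ∃ C : ℝ≥0, ∃ N' : ℕ, ∀ t ∈ Set.Icc (0 : ℝ) 1, ∀ ℏ ∈ Set.Ioc (0 : ℝ) 1,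
      ∀ a : Q d × Q d → ℂ, IsSymbol f m a → ∀ (B : ℝ≥0) (α β : ℝ) (v ζ : Q d → ℂ),
      IsCc v → ContDiff ℝ ∞ ζ → (∀ q, ‖ζ q‖ ≤ B) →
      (∀ q ∈ Function.support v, q.1 ∈ Metric.closedBall β 1) →
      (∀ q ∈ Function.support ζ, q.1 ∈ Metric.closedBall α 1) →
      eLpNorm (fun q => ζ q * Op ℏ t a v q) 2 ≤
        B * (C * (symNorm f m N' a).toNNReal * ((1 + ‖α - β‖₊) ^ N)⁻¹ : ℝ≥0) * eLpNorm v 2 := by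
  obtain ⟨C, hC⟩ := exists_eLpNorm_mul_quantOp_le (EuclideanSpace ℝ (Fin (d + 1))) N
  let n := 2 * (Module.finrank ℝ (EuclideanSpace ℝ (Fin (d + 1))) + 1) + N
  obtain ⟨K, hK⟩ := exists_derivBoundOn_comp_phaseScale hf hL hm d n
  refine ⟨C * K, n, fun t ht ℏ hℏ a ha B α β v ζ hv hζ hζB hvβ hζα => ?_⟩
  let lam := f (t * α + (1 - t) * β)
  have hlam : 0 < lam := hf _
  let J := angularScale d lam⁻¹
  have hJ : Topology.IsClosedEmbedding J := isClosedEmbedding_angularScale (inv_ne_zero hlam.ne')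
  have hh : 2 * Real.pi * ℏ ∈ Set.Ioc 0 (2 * Real.pi) :=
    ⟨mul_pos Real.two_pi_pos hℏ.1, mul_le_of_le_one_right Real.two_pi_pos.le hℏ.2⟩
  have hmodel := hC t ht (a ∘ phaseScale d lam (2 * Real.pi * ℏ)) _ B (EuclideanSpace.single 0 1)
    α β (ha.1.comp (phaseScale d lam _).contDiff) (by simp) (hK a ha _ hh _) (v ∘ J) (ζ ∘ J)
    ⟨hv.1.comp J.contDiff, hv.2.comp_isClosedEmbedding hJ⟩ (hζ.comp J.contDiff) (fun x => hζB (J x))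
    (fun y hy => by rw [inner_single_zero]; exact hvβ (J y) hy)
    (fun x hx => by rw [inner_single_zero]; exact hζα (J x) hx)
  have hOp : (fun x => (ζ ∘ J) x * quantOp t (a ∘ phaseScale d lam (2 * Real.pi * ℏ)) (v ∘ J) x) =
      (fun q => ζ q * Op ℏ t a v q) ∘ J :=
    funext fun x => congrArg (ζ (J x) * ·) (Op_angularScale hℏ.1 hlam t a v x).symm
  rw [hOp, eLpNorm_two_comp_angularScale (inv_pos.2 hlam),
    eLpNorm_two_comp_angularScale (inv_pos.2 hlam), mul_left_comm, ← mul_assoc C] at hmodel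
  exact (ENNReal.mul_le_mul_iff_right (by positivity) (by finiteness)).1 hmodel

theorem GoodF.pos (hf : GoodF f) (r : ℝ) : 0 < f r :=
  one_pos.trans_le (hf.2.1 r)

theorem GoodF.exists_lipschitzWith_log (hf : GoodF f) :
    ∃ L : ℝ≥0, LipschitzWith L fun r => Real.log (f r) := by
  obtain ⟨C, hC⟩ := hf.2.2 1 le_rfl
  refine ⟨C.toNNReal, lipschitzWith_of_nnnorm_deriv_le
    (fun r => ((hf.1.differentiable (by simp)) r).log (hf.pos r).ne') fun r => ?_⟩
  rw [← NNReal.coe_le_coe, coe_nnnorm, Real.norm_eq_abs, ← iteratedDeriv_one]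
  exact (hC r).trans (Real.le_coe_toNNReal C)

end OffDiagonalDecay

section Cutoff

variable {d : ℕ} {ψ : ℝ → ℝ} {x : ℝ}

theorem contDiff_cutoff (hψ : ContDiff ℝ ∞ ψ) :
    ContDiff ℝ ∞ fun q : Q d => (ψ (q.1 - x) : ℂ) :=
  Complex.ofRealCLM.contDiff.comp (hψ.comp (contDiff_fst.sub contDiff_const))

theorem IsCc.cutoff_mul {u : Q d → ℂ} (hu : IsCc u) (hψ : ContDiff ℝ ∞ ψ) :
    IsCc fun q : Q d => (ψ (q.1 - x) : ℂ) * u q :=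
  ⟨(contDiff_cutoff hψ).mul hu.1, hu.2.mul_left⟩

theorem fst_mem_closedBall_of_cutoff_ne_zero (hψsupp : Function.support ψ ⊆ Set.Icc (-1) 1)
    {q : Q d} (hq : (ψ (q.1 - x) : ℂ) ≠ 0) : q.1 ∈ Metric.closedBall x 1 := by
  rw [Metric.mem_closedBall, Real.dist_eq, abs_le]
  exact hψsupp (Complex.ofReal_ne_zero.1 hq)

theorem eLpNorm_two_cutoff_mul_le {B : ℝ≥0} (hB : ∀ r, ‖ψ r‖ ≤ B) (u : Q d → ℂ) :
    eLpNorm (fun q : Q d => (ψ (q.1 - x) : ℂ) * u q) 2 ≤ B * eLpNorm u 2 := by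
  refine eLpNorm_le_nnreal_smul_eLpNorm_of_ae_le_mul (ae_of_all _ fun q => ?_) 2
  rw [nnnorm_mul]
  gcongr
  exact (Complex.norm_real _).trans_le (hB _)

end Cutoff

theorem statement7_general {f : ℝ → ℝ} (hf : ∀ r, 0 < f r) {L : ℝ≥0}
    (hL : LipschitzWith L fun r => Real.log (f r)) {ψ : ℝ → ℝ} (hψ : ContDiff ℝ ∞ ψ)
    (hψsupp : Function.support ψ ⊆ Set.Icc (-1) 1) {m : ℝ} (hm : m ≤ 0) (d N : ℕ) :
    ∃ C > (0 : ℝ), ∃ N' : ℕ, ∀ t ∈ Set.Icc (0 : ℝ) 1, ∀ ℏ ∈ Set.Ioc (0 : ℝ) 1,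
      ∀ x y : ℝ, ∀ a : Q d × Q d → ℂ, IsSymbol f m a → ∀ u : Q d → ℂ, IsCc u →
        l2norm (fun q => (ψ (q.1 - x) : ℂ) * Op ℏ t a (fun q' => (ψ (q'.1 - y) : ℂ) * u q') q)
          ≤ C * symNorm f m N' a * Real.sqrt (1 + (x - y) ^ 2) ^ (-(N : ℝ)) * l2norm u := by
  obtain ⟨B', hB'⟩ := (HasCompactSupport.of_support_subset_isCompact isCompact_Icc
    hψsupp).exists_bound_of_continuous hψ.continuous
  let B := B'.toNNReal
  have hB (r : ℝ) : ‖ψ r‖ ≤ B := (hB' r).trans (Real.le_coe_toNNReal B')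
  obtain ⟨C, N', hC⟩ := exists_eLpNorm_mul_Op_le hf hL hm d N
  refine ⟨B * C * B + 1, by positivity, N', fun t ht ℏ hℏ x y a ha u hu => ?_⟩
  let D : ℝ≥0 := C * (symNorm f m N' a).toNNReal * ((1 + ‖x - y‖₊) ^ N)⁻¹
  let v : Q d → ℂ := fun q => (ψ (q.1 - y) : ℂ) * u q
  let ζ : Q d → ℂ := fun q => (ψ (q.1 - x) : ℂ)
  have hu0 : 0 ≤ l2norm u := Real.rpow_nonneg (integral_nonneg fun q => by positivity) _
  have hS0 := symNorm_nonneg hf m N' a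
  have hOp : eLpNorm (fun q => ζ q * Op ℏ t a v q) 2 ≤ B * D * eLpNorm v 2 :=
    hC t ht ℏ hℏ a ha B x y v ζ (hu.cutoff_mul hψ) (contDiff_cutoff hψ)
      (fun q => (Complex.norm_real _).trans_le (hB _))
      (fun q hq => fst_mem_closedBall_of_cutoff_ne_zero hψsupp (left_ne_zero_of_mul hq))
      (fun q hq => fst_mem_closedBall_of_cutoff_ne_zero hψsupp hq)
  have hofReal : ENNReal.ofReal (l2norm fun q => ζ q * Op ℏ t a v q) ≤
      ENNReal.ofReal ((B * D * B : ℝ≥0) * l2norm u) := by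
    refine ((ofReal_l2norm_le _).trans hOp).trans ?_
    rw [ENNReal.ofReal_mul NNReal.zero_le_coe, ENNReal.ofReal_coe_nnreal, ← hu.eLpNorm_two,
      ENNReal.coe_mul (B * D), ENNReal.coe_mul B D, mul_assoc (B * D : ℝ≥0∞)]
    gcongr
    exact eLpNorm_two_cutoff_mul_le hB u
  calc _ ≤ (B * D * B : ℝ≥0) * l2norm u := (ENNReal.ofReal_le_ofReal_iff (by positivity)).1 hofReal
    _ = B * C * B * symNorm f m N' a * ((1 + |x - y|) ^ N)⁻¹ * l2norm u := by
        simp only [D, NNReal.coe_mul, NNReal.coe_inv, NNReal.coe_pow, NNReal.coe_add,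
          NNReal.coe_one, coe_nnnorm, Real.norm_eq_abs, Real.coe_toNNReal _ hS0]
        ring
    _ ≤ _ := by
        gcongr
        · exact le_add_of_nonneg_right zero_le_one
        · exact inv_one_add_abs_pow_le _ N

end

/-- off-diagonal decay `‖ψ_j Op^t_ℏ(a) ψ_k‖ ≲ ⟨j-k⟩^{-N}`. -/
theorem statement7 (d : ℕ) (f : ℝ → ℝ) (hf : GoodF f)
    (ψ : ℝ → ℝ) (hψs : ContDiff ℝ (⊤ : ℕ∞) ψ) (hψc : HasCompactSupport ψ)
    (hψ0 : ∀ r : ℝ, 0 ≤ ψ r) (hψsupp : tsupport ψ ⊆ Set.Ioo (-1 : ℝ) 1)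
    (hψsum : ∀ r : ℝ, ∑' j : ℤ, ψ (r - (j : ℝ)) = 1) (N : ℕ) :
    ∃ C > (0 : ℝ), ∃ N' : ℕ, ∀ t ∈ Set.Icc (0 : ℝ) 1, ∀ ℏ ∈ Set.Ioc (0 : ℝ) 1,
      ∀ j k : ℤ, ∀ a : Q d × Q d → ℂ, IsSymbol f 0 a → ∀ u : Q d → ℂ, IsCc u →
        l2norm (fun q : Q d => Complex.ofReal (ψ (q.1 - (j : ℝ))) *
            Op ℏ t a (fun q' => Complex.ofReal (ψ (q'.1 - (k : ℝ))) * u q') q)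
          ≤ C * symNorm f 0 N' a *
              Real.sqrt (1 + ((j : ℝ) - (k : ℝ)) ^ 2) ^ (-(N : ℝ)) * l2norm u := by
  obtain ⟨L, hL⟩ := hf.exists_lipschitzWith_log
  obtain ⟨C, hC, N', h⟩ := statement7_general hf.pos hL hψs
    ((subset_tsupport ψ).trans (hψsupp.trans Set.Ioo_subset_Icc_self)) le_rfl d N
  exact ⟨C, hC, N', fun t ht ℏ hℏ j k => h t ht ℏ hℏ j k⟩

end
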